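/- Let σ₁,…,σ_k be non-crossing RGFs and let q < k be an index such that σ_q is either empty, or connected, or has all letters distinct (i.e., all its blocks are singletons). Then the pattern σ = 1[σ₁]1[σ₂]1⋯1[σ_{q−1}]1[σ_q]1[σ_{q+1}]1[σ_{q+2}]1⋯1[σ_k]1 is cc-equivalent to the pattern σ′ = 1[σ₁]1[σ₂]1⋯1[σ_{q−1}]1[σ_{q+1}]1[σ_q]1[σ_{q+2}]1⋯1[σ_k]1 obtained by swapping σ_q and σ_{q+1}. -/

import Mathlib

/-!
A non-crossing connected word is uniquely of the form `1[τ₁]1⋯1[τ_m]1` with non-crossing `τ_i`.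
It contains `σ = 1[σ₁]1⋯1[σ_k]1` iff some `τ_i` already contains `σ`, or the list `τ₁, …, τ_m` can
be cut into consecutive nonempty blocks whose joins contain `σ₁, …, σ_k` in turn; the latter lists
form a product of languages, `L(σ₁) ⋯ L(σ_k)` followed by anything. If `σ_q` is empty, connected or
has distinct letters, then `L(σ_q)` is closed under reversal: membership is nonemptiness, or
containment in one single word, or a lower bound for the total number of letters. Reversing what
follows the first block, and then the whole list, therefore rearranges `L(σ_q) L(σ_{q+1})` into
`L(σ_{q+1}) L(σ_q)` without changing the multiset of the `τ_i`.

The `τ_i` still range over the avoiders of `σ` on one side and of `σ'` on the other. By induction on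
the length these are equinumerous among short words, so some length-preserving permutation of all
words exchanges them and moves only words in the symmetric difference. A moved word contains `σ` or
`σ'`, hence every `σ_i`, so applying the permutation to the `τ_i` does not affect whether they can
be cut as above.
-/

/-- A restricted growth function (canonical sequential form of a set partition):
a word over the positive integers whose first letter is 1 and where each letter
is at most one more than the maximum of the preceding letters. -/
def IsRGF (w : List ℕ) : Prop :=
  (∀ x ∈ w, 1 ≤ x) ∧
  (w ≠ [] → w.getD 0 0 = 1) ∧
  ∀ i, i + 1 < w.length → w.getD (i + 1) 0 ≤ ((w.take (i + 1)).foldr max 0) + 1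

/-- Two words of the same length are order-isomorphic: corresponding entries
compare the same way (this preserves equalities as well). -/
def WordOrdIso (s t : List ℕ) : Prop :=
  s.length = t.length ∧
  ∀ i j, i < s.length → j < s.length →
    (s.getD i 0 < s.getD j 0 ↔ t.getD i 0 < t.getD j 0)

/-- `w` contains the pattern `p`: a subsequence of `w` is order-isomorphic to `p`. -/
def PatContains (w p : List ℕ) : Prop := ∃ s : List ℕ, s.Sublist w ∧ WordOrdIso s p

/-- `w` avoids the pattern `p`. -/
def PatAvoids (w p : List ℕ) : Prop := ¬ PatContains w p

/-- `pCount n T` = number of RGFs of length `n` avoiding every pattern in `T`. -/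
noncomputable def pCount (n : ℕ) (T : Set (List ℕ)) : ℕ :=
  {w : List ℕ | IsRGF w ∧ w.length = n ∧ ∀ p ∈ T, PatAvoids w p}.ncard

/-- A word is non-crossing if it avoids the pattern 1212. -/
def NonCrossing (w : List ℕ) : Prop := PatAvoids w [1,2,1,2]

/-- The number of distinct letters of an RGF equals its maximum letter. -/
def nLetters (w : List ℕ) : ℕ := w.foldr max 0

/-- `rgfComp a b` is the pattern `a[b]`: `a` followed by `b` shifted up by the
number of distinct letters of `a`. -/
def rgfComp (a b : List ℕ) : List ℕ := a ++ b.map (· + nLetters a)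

/-- A connected RGF: nonempty and not expressible as `σ[τ]` with `σ, τ` nonempty RGFs. -/
def Connected (w : List ℕ) : Prop :=
  w ≠ [] ∧ ¬ ∃ a b : List ℕ, IsRGF a ∧ IsRGF b ∧ a ≠ [] ∧ b ≠ [] ∧ w = rgfComp a b

/-- `w` decomposes as `σ₁[σ₂]⋯[σ_p]` with each `σ_i` a connected RGF. -/
def HasComponents (w : List ℕ) (p : ℕ) : Prop :=
  ∃ l : List (List ℕ), l.length = p ∧ (∀ c ∈ l, IsRGF c ∧ Connected c) ∧
    w = l.foldr rgfComp []

/-- Number of non-crossing RGFs of length `n` with `p` components avoiding `σ`. -/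
noncomputable def ncCount (n p : ℕ) (σ : List ℕ) : ℕ :=
  {w : List ℕ | IsRGF w ∧ NonCrossing w ∧ w.length = n ∧ PatAvoids w σ ∧
    HasComponents w p}.ncard

/-- cc-equivalence of patterns. -/
def ccEquiv (σ τ : List ℕ) : Prop := ∀ n p : ℕ, ncCount n p σ = ncCount n p τ

/-- Number of non-crossing RGFs of length `n` avoiding `σ`. -/
noncomputable def ncAvoidCount (n : ℕ) (σ : List ℕ) : ℕ :=
  {w : List ℕ | IsRGF w ∧ NonCrossing w ∧ w.length = n ∧ PatAvoids w σ}.ncard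

/-- Auxiliary: builds `1[σ₁]1[σ₂]⋯1[σ_k]1` with accumulated letter shift `s`. -/
def onePatAux : ℕ → List (List ℕ) → List ℕ
  | _, [] => [1]
  | s, c :: rest => 1 :: (c.map (· + s) ++ onePatAux (s + nLetters c) rest)

/-- The pattern `1[σ₁]1[σ₂]⋯1[σ_k]1`. -/
def onePat (l : List (List ℕ)) : List ℕ := onePatAux 1 l

/-- The pattern `1[σ]1[τ]`. -/
def pat2 (σ τ : List ℕ) : List ℕ :=
  1 :: (σ.map (· + 1) ++ 1 :: τ.map (· + (1 + nLetters σ)))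

/-! ### Rearranging the letters of lists in a language -/

section Rearrange

variable {α : Type*}

/-- Two languages are rearrangement equivalent over an alphabet `S` if some bijection of the set of
all lists, which only permutes the entries of each list, matches their lists with entries in `S`.
Such a bijection preserves every statistic that is blind to the order of the entries. -/
def RearrangeEquivOn (S : Set α) (C D : Language α) : Prop :=
  ∃ F : Equiv.Perm (List α), (∀ l, (F l).Perm l) ∧ ∀ l, (∀ x ∈ l, x ∈ S) → (F l ∈ D ↔ l ∈ C)

open scoped Classical in
/-- Applies `F` to what remains of a list after its shortest prefix in the language `U`; a list
without a prefix in `U` is left alone. -/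
noncomputable def applyAfterPrefix (F : List α → List α) : Language α → List α → List α
  | U, [] => if [] ∈ U then F [] else []
  | U, x :: l => if [] ∈ U then F (x :: l) else x :: applyAfterPrefix F (U.leftQuotient [x]) l

theorem applyAfterPrefix_of_nil_mem (F : List α → List α) {U : Language α} (hU : [] ∈ U)
    (l : List α) : applyAfterPrefix F U l = F l := by
  cases l <;> simp [applyAfterPrefix, hU]

theorem applyAfterPrefix_perm {F : List α → List α} (hF : ∀ l, (F l).Perm l) (U : Language α)
    (l : List α) : (applyAfterPrefix F U l).Perm l := by
  induction l generalizing U with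
  | nil => simp only [applyAfterPrefix]; split_ifs <;> simp [hF]
  | cons x l ih => simp only [applyAfterPrefix]; split_ifs <;> simp [hF, ih]

theorem applyAfterPrefix_leftInverse {F G : List α → List α} (h : Function.LeftInverse G F)
    (U : Language α) : Function.LeftInverse (applyAfterPrefix G U) (applyAfterPrefix F U) := by
  intro l
  by_cases hU : [] ∈ U
  · rw [applyAfterPrefix_of_nil_mem _ hU, applyAfterPrefix_of_nil_mem _ hU, h]
  · induction l generalizing U with
    | nil => simp [applyAfterPrefix, hU]
    | cons x l ih =>
      by_cases hx : [] ∈ U.leftQuotient [x]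
      · simp [applyAfterPrefix, hU, applyAfterPrefix_of_nil_mem _ hx, h l]
      · simp [applyAfterPrefix, hU, ih _ hx]

theorem mul_eq_self_of_nil_mem {U C : Language α} (hC : ⊤ * C ≤ C) (hU : [] ∈ U) : U * C = C := by
  refine le_antisymm ((mul_le_mul_left le_top C).trans hC) fun l hl => ?_
  exact Language.append_mem_mul hU hl

theorem cons_mem_mul_iff {U C : Language α} (hU : [] ∉ U) {x : α} {l : List α} :
    x :: l ∈ U * C ↔ l ∈ U.leftQuotient [x] * C := by
  simp only [Language.mem_mul, Language.mem_leftQuotient]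
  constructor
  · rintro ⟨_ | ⟨y, u⟩, hu, v, hv, huv⟩
    · exact absurd hu hU
    · obtain ⟨rfl, rfl⟩ := List.cons.inj huv
      exact ⟨u, hu, v, hv, rfl⟩
  · rintro ⟨u, hu, v, hv, rfl⟩
    exact ⟨x :: u, hu, v, hv, rfl⟩

theorem applyAfterPrefix_mem_mul_iff {S : Set α} {C D : Language α} (hC : ⊤ * C ≤ C)
    (hD : ⊤ * D ≤ D) {F : List α → List α} (hF : ∀ l, (∀ x ∈ l, x ∈ S) → (F l ∈ D ↔ l ∈ C))
    (U : Language α) {l : List α} (hl : ∀ x ∈ l, x ∈ S) :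
    applyAfterPrefix F U l ∈ U * D ↔ l ∈ U * C := by
  induction l generalizing U with
  | nil =>
    by_cases hU : [] ∈ U
    · rw [applyAfterPrefix_of_nil_mem _ hU, mul_eq_self_of_nil_mem hC hU,
        mul_eq_self_of_nil_mem hD hU, hF _ hl]
    · simp [applyAfterPrefix, hU, Language.mem_mul]
  | cons x l ih =>
    by_cases hU : [] ∈ U
    · rw [applyAfterPrefix_of_nil_mem _ hU, mul_eq_self_of_nil_mem hC hU,
        mul_eq_self_of_nil_mem hD hU, hF _ hl]
    · rw [applyAfterPrefix, if_neg hU, cons_mem_mul_iff hU, cons_mem_mul_iff hU,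
        ih _ (List.forall_mem_cons.1 hl).2]

theorem top_mul_mul_le {C : Language α} (hC : ⊤ * C ≤ C) (D : Language α) :
    ⊤ * (C * D) ≤ C * D := by
  rw [← mul_assoc]
  exact mul_le_mul_left hC D

theorem mul_mul_top_le {D : Language α} (hD : D * ⊤ ≤ D) (C : Language α) : C * D * ⊤ ≤ C * D := by
  rw [mul_assoc]
  exact mul_le_mul_right hD C

theorem top_mul_reverse_le {C : Language α} (hC : C * ⊤ ≤ C) : ⊤ * C.reverse ≤ C.reverse := by
  rintro _ ⟨u, -, v, hv, rfl⟩
  exact hC ⟨v.reverse, hv, u.reverse, trivial, by simp⟩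

namespace RearrangeEquivOn

variable {S : Set α} {A B C D E : Language α}

theorem trans (h₁ : RearrangeEquivOn S C D) (h₂ : RearrangeEquivOn S D E) :
    RearrangeEquivOn S C E := by
  obtain ⟨F, hF, hFD⟩ := h₁
  obtain ⟨G, hG, hGE⟩ := h₂
  exact ⟨F.trans G, fun l => (hG _).trans (hF l), fun l hl =>
    (hGE _ fun x hx => hl x ((hF l).mem_iff.1 hx)).trans (hFD l hl)⟩

theorem of_mem_iff (h : ∀ l, (∀ x ∈ l, x ∈ S) → (l ∈ D ↔ l ∈ C)) : RearrangeEquivOn S C D :=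
  ⟨Equiv.refl _, List.Perm.refl, h⟩

theorem reverse_right (S : Set α) (C : Language α) : RearrangeEquivOn S C C.reverse :=
  ⟨List.reverse_involutive.toPerm, List.reverse_perm, fun l _ => by simp [Language.mem_reverse]⟩

theorem reverse_left (S : Set α) (C : Language α) : RearrangeEquivOn S C.reverse C := by
  simpa using reverse_right S C.reverse

theorem mul_left (h : RearrangeEquivOn S C D) (hC : ⊤ * C ≤ C) (hD : ⊤ * D ≤ D)
    (U : Language α) : RearrangeEquivOn S (U * C) (U * D) := by
  obtain ⟨F, hF, hFD⟩ := h
  exact ⟨⟨applyAfterPrefix F U, applyAfterPrefix F.symm U,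
    applyAfterPrefix_leftInverse F.symm_apply_apply U,
    applyAfterPrefix_leftInverse F.apply_symm_apply U⟩, applyAfterPrefix_perm hF U,
    fun _ hl => applyAfterPrefix_mem_mul_iff hC hD hFD U hl⟩

theorem mul_right (h : RearrangeEquivOn S C D) (hC : C * ⊤ ≤ C) (hD : D * ⊤ ≤ D)
    (V : Language α) : RearrangeEquivOn S (C * V) (D * V) := by
  have hrev : RearrangeEquivOn S C.reverse D.reverse :=
    ((reverse_left S C).trans h).trans (reverse_right S D)
  have hmul := hrev.mul_left (top_mul_reverse_le hC) (top_mul_reverse_le hD) V.reverse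
  rw [← Language.reverse_mul, ← Language.reverse_mul] at hmul
  exact ((reverse_right S _).trans hmul).trans (reverse_left S _)

/-- Reversing the part that follows the shortest prefix in `A`, and then the whole list, turns
`A * B` into `B * A.reverse`. -/
theorem mul_comm (hA : ∀ l, (∀ x ∈ l, x ∈ S) → (l.reverse ∈ A ↔ l ∈ A)) (hBl : ⊤ * B ≤ B)
    (hBr : B * ⊤ ≤ B) : RearrangeEquivOn S (A * B) (B * A) := by
  have hrev := ((reverse_right S B).mul_left hBl (top_mul_reverse_le hBr) A).trans
    (reverse_right S (A * B.reverse))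
  rw [Language.reverse_mul, Language.reverse_reverse] at hrev
  refine hrev.trans (of_mem_iff fun l hl => ?_)
  simp only [Language.mem_mul, Language.mem_reverse]
  refine exists_congr fun u => and_congr_right fun _ => exists_congr fun v =>
    and_congr_left fun huv => (hA v fun x hx => hl x ?_).symm
  simp [← huv, hx]

end RearrangeEquivOn

end Rearrange

/-! ### Restricted growth functions -/

section RGF

/-- The restricted growth condition for a word read after a prefix of maximum `m`, by recursion on
the word; restricted growth functions are the case `m = 0`. -/
def RGFFrom : ℕ → List ℕ → Prop
  | _, [] => True
  | m, x :: w => 0 < x ∧ x ≤ m + 1 ∧ RGFFrom (max m x) w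

theorem rgfFrom_iff {m : ℕ} {w : List ℕ} : RGFFrom m w ↔ (∀ x ∈ w, 0 < x) ∧
    ∀ i < w.length, w.getD i 0 ≤ max m ((w.take i).foldr max 0) + 1 := by
  induction w generalizing m with
  | nil => simp [RGFFrom]
  | cons x w ih =>
    simp only [RGFFrom, ih, List.forall_mem_cons, List.length_cons, Nat.forall_lt_succ_left,
      List.getD_cons_zero, List.getD_cons_succ, List.take_zero, List.take_succ_cons,
      List.foldr_nil, List.foldr_cons, max_assoc, Nat.max_zero]
    tauto

theorem isRGF_iff_rgfFrom {w : List ℕ} : IsRGF w ↔ RGFFrom 0 w := by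
  rw [rgfFrom_iff]
  refine and_congr_right fun hpos => ?_
  cases w with
  | nil => simp
  | cons x w =>
    have hx : 0 < x := hpos x List.mem_cons_self
    simp only [List.length_cons, Nat.forall_lt_succ_left, Nat.add_lt_add_iff_right, zero_max]
    refine and_congr ?_ Iff.rfl
    simp
    omega

theorem IsRGF.pos {w : List ℕ} (h : IsRGF w) {x : ℕ} (hx : x ∈ w) : 0 < x := h.1 x hx

theorem isRGF_nil : IsRGF [] := isRGF_iff_rgfFrom.2 trivial

theorem nLetters_nil : nLetters [] = 0 := rfl

theorem nLetters_cons (x : ℕ) (w : List ℕ) : nLetters (x :: w) = max x (nLetters w) := rfl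

theorem nLetters_append (u v : List ℕ) : nLetters (u ++ v) = max (nLetters u) (nLetters v) := by
  induction u with
  | nil => simp [nLetters_nil]
  | cons x u ih => simp [nLetters_cons, ih, max_assoc]

theorem nLetters_le_iff {w : List ℕ} {m : ℕ} : nLetters w ≤ m ↔ ∀ x ∈ w, x ≤ m := by
  induction w with
  | nil => simp [nLetters_nil]
  | cons x w ih => simp [nLetters_cons, ih]

theorem le_nLetters {w : List ℕ} {x : ℕ} (h : x ∈ w) : x ≤ nLetters w :=
  nLetters_le_iff.1 le_rfl x h

theorem nLetters_lt {w : List ℕ} {m : ℕ} (hm : 0 < m) (h : ∀ x ∈ w, x < m) : nLetters w < m :=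
  Nat.lt_of_le_pred hm (nLetters_le_iff.2 fun x hx => Nat.le_pred_of_lt (h x hx))

theorem max_nLetters_map_add (w : List ℕ) (s : ℕ) :
    max s (nLetters (w.map (· + s))) = s + nLetters w := by
  induction w with
  | nil => simp [nLetters_nil]
  | cons x w ih => simp only [List.map_cons, nLetters_cons]; omega

theorem nLetters_rgfComp (a b : List ℕ) : nLetters (rgfComp a b) = nLetters a + nLetters b := by
  rw [rgfComp, nLetters_append, max_nLetters_map_add]

theorem rgfFrom_append {m : ℕ} {u v : List ℕ} :
    RGFFrom m (u ++ v) ↔ RGFFrom m u ∧ RGFFrom (max m (nLetters u)) v := by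
  induction u generalizing m with
  | nil => simp [RGFFrom, nLetters_nil]
  | cons x u ih => simp [RGFFrom, ih, nLetters_cons, and_assoc, max_assoc]

theorem rgfFrom_map_add_iff {k m : ℕ} {w : List ℕ} (hw : ∀ x ∈ w, 0 < x) :
    RGFFrom (k + m) (w.map (· + m)) ↔ RGFFrom k w := by
  induction w generalizing k with
  | nil => simp [RGFFrom]
  | cons x w ih =>
    obtain ⟨hx, hw⟩ := List.forall_mem_cons.1 hw
    have hxm : x + m ≤ k + m + 1 ↔ x ≤ k + 1 := by omega
    simp only [List.map_cons, RGFFrom, max_add_add_right, ih hw, hxm, hx, Nat.add_pos_left hx]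

theorem exists_pos_map_add_eq {m : ℕ} {w : List ℕ} (hw : ∀ x ∈ w, m < x) :
    ∃ v : List ℕ, (∀ x ∈ v, 0 < x) ∧ v.map (· + m) = w := by
  refine ⟨w.map (· - m), by simpa using hw, ?_⟩
  rw [List.map_map]
  exact (List.map_congr_left fun x hx => Nat.sub_add_cancel (hw x hx).le).trans (List.map_id w)

theorem RGFFrom.mem_of_le_nLetters {m x : ℕ} {w : List ℕ} (h : RGFFrom m w) (hm : m < x)
    (hx : x ≤ nLetters w) : x ∈ w := by
  induction w generalizing m with
  | nil => simp only [nLetters_nil] at hx; omega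
  | cons y w ih =>
    obtain ⟨-, hy, hw⟩ := h
    rcases eq_or_ne x y with rfl | hxy
    · exact List.mem_cons_self
    · rw [nLetters_cons] at hx
      exact List.mem_cons_of_mem _ (ih hw (by omega) (by omega))

theorem RGFFrom.nLetters_le {m : ℕ} {w : List ℕ} (h : RGFFrom m w) :
    nLetters w ≤ m + w.length := by
  induction w generalizing m with
  | nil => simp [nLetters_nil]
  | cons x w ih =>
    obtain ⟨-, hx, hw⟩ := h
    have := ih hw
    simp only [nLetters_cons, List.length_cons]
    omega

theorem finite_setOf_isRGF_length_eq (n : ℕ) : {w : List ℕ | IsRGF w ∧ w.length = n}.Finite := by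
  refine ((List.finite_length_eq (Fin (n + 1)) n).image (List.map Fin.val)).subset ?_
  rintro w ⟨hw, rfl⟩
  have hlt : ∀ x ∈ w, x < w.length + 1 := fun x hx => by
    have := (isRGF_iff_rgfFrom.1 hw).nLetters_le
    have := le_nLetters hx
    omega
  exact ⟨w.pmap Fin.mk hlt, by simp, by simp [List.map_pmap]⟩

theorem isRGF_rgfComp_iff {a b : List ℕ} (hb : ∀ x ∈ b, 0 < x) :
    IsRGF (rgfComp a b) ↔ IsRGF a ∧ IsRGF b := by
  have hshift := rgfFrom_map_add_iff (k := 0) (m := nLetters a) hb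
  rw [zero_add] at hshift
  simp only [isRGF_iff_rgfFrom, rgfComp, rgfFrom_append, zero_max, hshift]

theorem IsRGF.exists_eq_rgfComp {u v : List ℕ} (h : IsRGF (u ++ v))
    (hlt : ∀ x ∈ u, ∀ y ∈ v, x < y) : ∃ w, IsRGF u ∧ IsRGF w ∧ u ++ v = rgfComp u w := by
  have hv : ∀ y ∈ v, nLetters u < y := fun y hy =>
    nLetters_lt (h.pos (List.mem_append_right u hy)) fun x hx => hlt x hx y hy
  obtain ⟨w, hw, rfl⟩ := exists_pos_map_add_eq hv
  obtain ⟨hu, hw'⟩ := (isRGF_rgfComp_iff hw).1 h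
  exact ⟨w, hu, hw', rfl⟩

/-- The word `σ₁[σ₂]⋯[σ_p]` with the words `σ_i` of a list as components. -/
def rgfJoin (l : List (List ℕ)) : List ℕ := l.foldr rgfComp []

theorem rgfJoin_nil : rgfJoin [] = [] := rfl

theorem rgfJoin_cons (c : List ℕ) (l : List (List ℕ)) :
    rgfJoin (c :: l) = c ++ (rgfJoin l).map (· + nLetters c) := rfl

theorem nLetters_rgfJoin (l : List (List ℕ)) : nLetters (rgfJoin l) = (l.map nLetters).sum := by
  induction l with
  | nil => rfl
  | cons c l ih => rw [List.map_cons, List.sum_cons, ← ih]; exact nLetters_rgfComp c (rgfJoin l)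

theorem length_rgfJoin (l : List (List ℕ)) : (rgfJoin l).length = (l.map List.length).sum := by
  induction l with
  | nil => rfl
  | cons c l ih => simp [rgfJoin_cons, ih]

theorem rgfJoin_append (l₁ l₂ : List (List ℕ)) :
    rgfJoin (l₁ ++ l₂) = rgfJoin l₁ ++ (rgfJoin l₂).map (· + nLetters (rgfJoin l₁)) := by
  induction l₁ with
  | nil => simp [rgfJoin_nil, nLetters_nil]
  | cons c l ih =>
    rw [List.cons_append, rgfJoin_cons, ih, nLetters_rgfJoin (c :: l), rgfJoin_cons]
    simp [nLetters_rgfJoin, Function.comp_def, add_comm, add_left_comm]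

theorem isRGF_rgfJoin {l : List (List ℕ)} (h : ∀ c ∈ l, IsRGF c) : IsRGF (rgfJoin l) := by
  induction l with
  | nil => exact isRGF_nil
  | cons c l ih =>
    obtain ⟨hc, hl⟩ := List.forall_mem_cons.1 h
    exact (isRGF_rgfComp_iff (ih hl).1).2 ⟨hc, ih hl⟩

theorem pos_of_mem_rgfJoin {l : List (List ℕ)} (h : ∀ c ∈ l, ∀ x ∈ c, 0 < x) :
    ∀ x ∈ rgfJoin l, 0 < x := by
  induction l with
  | nil => simp [rgfJoin_nil]
  | cons c l ih =>
    obtain ⟨hc, hl⟩ := List.forall_mem_cons.1 h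
    intro x hx
    rcases List.mem_append.1 hx with hx | hx
    · exact hc x hx
    · obtain ⟨y, hy, rfl⟩ := List.mem_map.1 hx
      exact Nat.add_pos_left (ih hl y hy) _

theorem map_rgfJoin_sublist_of_mem {l : List (List ℕ)} {c : List ℕ} (hc : c ∈ l) :
    ∃ s, (c.map (· + s)).Sublist (rgfJoin l) := by
  obtain ⟨l₁, l₂, rfl⟩ := List.append_of_mem hc
  refine ⟨nLetters (rgfJoin l₁), ?_⟩
  rw [rgfJoin_append, rgfJoin_cons, List.map_append]
  exact (List.sublist_append_left _ _).trans (List.sublist_append_right _ _)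

theorem IsRGF.exists_components {w : List ℕ} (hw : IsRGF w) :
    ∃ l, (∀ c ∈ l, IsRGF c ∧ Connected c) ∧ rgfJoin l = w := by
  induction hn : w.length using Nat.strong_induction_on generalizing w with
  | _ n ih =>
    subst hn
    by_cases hne : w = []
    · exact ⟨[], by simp, hne.symm⟩
    by_cases hc : Connected w
    · exact ⟨[w], by simp [hw, hc], by simp [rgfJoin_cons, rgfJoin_nil]⟩
    simp only [Connected, hne, ne_eq, not_false_eq_true, true_and, not_not] at hc
    obtain ⟨a, b, ha, hb, hane, hbne, rfl⟩ := hc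
    have ha' := List.length_pos_of_ne_nil hane
    have hb' := List.length_pos_of_ne_nil hbne
    have hlen : (rgfComp a b).length = a.length + b.length := by simp [rgfComp]
    obtain ⟨la, hla, rfl⟩ := ih a.length (by omega) ha rfl
    obtain ⟨lb, hlb, rfl⟩ := ih b.length (by omega) hb rfl
    exact ⟨la ++ lb, List.forall_mem_append.2 ⟨hla, hlb⟩, rgfJoin_append la lb⟩

end RGF

/-! ### Pattern containment -/

section Containment

variable {w w' p q : List ℕ}

theorem WordOrdIso.refl (s : List ℕ) : WordOrdIso s s := ⟨rfl, fun _ _ _ _ => Iff.rfl⟩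

theorem WordOrdIso.symm {s t : List ℕ} (h : WordOrdIso s t) : WordOrdIso t s :=
  ⟨h.1.symm, fun i j hi hj => (h.2 i j (h.1 ▸ hi) (h.1 ▸ hj)).symm⟩

theorem WordOrdIso.trans {s t u : List ℕ} (h₁ : WordOrdIso s t) (h₂ : WordOrdIso t u) :
    WordOrdIso s u :=
  ⟨h₁.1.trans h₂.1, fun i j hi hj => (h₁.2 i j hi hj).trans (h₂.2 i j (h₁.1 ▸ hi) (h₁.1 ▸ hj))⟩

/-- A list of pairs of letters that match in order: the letters in the first coordinates compare
in the same way as those in the second coordinates. An occurrence of a pattern in a word is stored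
as such a list, so that cutting the word or the pattern cuts the other one along. -/
def OrderMatching (z : List (ℕ × ℕ)) : Prop := ∀ P ∈ z, ∀ Q ∈ z, (P.1 < Q.1 ↔ P.2 < Q.2)

theorem OrderMatching.of_subset {y z : List (ℕ × ℕ)} (h : OrderMatching z) (hy : y ⊆ z) :
    OrderMatching y := fun P hP Q hQ => h P (hy hP) Q (hy hQ)

theorem OrderMatching.append {y z : List (ℕ × ℕ)} (hy : OrderMatching y) (hz : OrderMatching z)
    (h : ∀ P ∈ y, ∀ Q ∈ z, (P.1 < Q.1 ↔ P.2 < Q.2) ∧ (Q.1 < P.1 ↔ Q.2 < P.2)) :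
    OrderMatching (y ++ z) := by
  intro P hP Q hQ
  rcases List.mem_append.1 hP with hP | hP <;> rcases List.mem_append.1 hQ with hQ | hQ
  · exact hy P hP Q hQ
  · exact (h P hP Q hQ).1
  · exact (h Q hQ P hP).2
  · exact hz P hP Q hQ

theorem OrderMatching.fst_eq_iff {z : List (ℕ × ℕ)} (h : OrderMatching z) {P Q : ℕ × ℕ}
    (hP : P ∈ z) (hQ : Q ∈ z) : P.1 = Q.1 ↔ P.2 = Q.2 := by
  have h₁ := h P hP Q hQ
  have h₂ := h Q hQ P hP
  omega

theorem orderMatching_iff_wordOrdIso {z : List (ℕ × ℕ)} :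
    OrderMatching z ↔ WordOrdIso (z.map Prod.fst) (z.map Prod.snd) := by
  simp only [OrderMatching, WordOrdIso, List.forall_mem_iff_getElem, List.length_map, true_and]
  refine ⟨fun h i j hi hj => ?_, fun h i hi j hj => ?_⟩
  · simpa [hi, hj] using h i hi j hj
  · simpa [hi, hj] using h i j hi hj

theorem patContains_iff_exists_orderMatching :
    PatContains w p ↔ ∃ z, OrderMatching z ∧ (z.map Prod.fst).Sublist w ∧ z.map Prod.snd = p := by
  constructor
  · rintro ⟨s, hs, hsp⟩
    have hfst : (s.zip p).map Prod.fst = s := List.map_fst_zip hsp.1.le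
    have hsnd : (s.zip p).map Prod.snd = p := List.map_snd_zip hsp.1.ge
    exact ⟨s.zip p, orderMatching_iff_wordOrdIso.2 (by rwa [hfst, hsnd]), by rwa [hfst], hsnd⟩
  · rintro ⟨z, hz, hsub, rfl⟩
    exact ⟨_, hsub, orderMatching_iff_wordOrdIso.1 hz⟩

theorem PatContains.mono_left (h : w.Sublist w') (hw : PatContains w p) : PatContains w' p := by
  obtain ⟨s, hs, hsp⟩ := hw
  exact ⟨s, hs.trans h, hsp⟩

theorem PatContains.mono_right (h : q.Sublist p) (hw : PatContains w p) : PatContains w q := by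
  obtain ⟨z, hz, hsub, rfl⟩ := patContains_iff_exists_orderMatching.1 hw
  obtain ⟨y, hy, rfl⟩ := List.sublist_map_iff.1 h
  exact patContains_iff_exists_orderMatching.2
    ⟨y, hz.of_subset hy.subset, (hy.map Prod.fst).trans hsub, rfl⟩

theorem PatContains.of_sublist (h : p.Sublist w) : PatContains w p := ⟨p, h, .refl p⟩

theorem wordOrdIso_map {f : ℕ → ℕ} (hf : StrictMono f) (s : List ℕ) :
    WordOrdIso (s.map f) s := by
  refine ⟨List.length_map f, fun i j hi hj => ?_⟩
  rw [List.length_map] at hi hj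
  simp [hi, hj, hf.lt_iff_lt]

theorem patContains_map_left {f : ℕ → ℕ} (hf : StrictMono f) :
    PatContains (w.map f) p ↔ PatContains w p := by
  simp only [PatContains, List.sublist_map_iff]
  constructor
  · rintro ⟨_, ⟨s, hs, rfl⟩, hsp⟩
    exact ⟨s, hs, (wordOrdIso_map hf s).symm.trans hsp⟩
  · rintro ⟨s, hs, hsp⟩
    exact ⟨s.map f, ⟨s, hs, rfl⟩, (wordOrdIso_map hf s).trans hsp⟩

theorem PatContains.of_map_right {f : ℕ → ℕ} (hf : StrictMono f) (h : PatContains w (p.map f)) :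
    PatContains w p := by
  obtain ⟨s, hs, hsp⟩ := h
  exact ⟨s, hs, hsp.trans (wordOrdIso_map hf p)⟩

theorem wordOrdIso_1212_iff : WordOrdIso w [1, 2, 1, 2] ↔ ∃ x y, x < y ∧ w = [x, y, x, y] := by
  constructor
  · rintro ⟨hlen, hiso⟩
    obtain ⟨a, b, c, d, rfl⟩ := List.length_eq_four.1 hlen
    have hab := hiso 0 1
    have hac := hiso 0 2
    have hca := hiso 2 0
    have hbd := hiso 1 3
    have hdb := hiso 3 1
    simp only [List.length_cons, List.length_nil] at hab hac hca hbd hdb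
    simp only [List.getD_cons_zero, List.getD_cons_succ] at hab hac hca hbd hdb
    obtain rfl : c = a := by omega
    obtain rfl : d = b := by omega
    exact ⟨_, _, by omega, rfl⟩
  · rintro ⟨x, y, hxy, rfl⟩
    have hmatch : OrderMatching [(x, 1), (y, 2), (x, 1), (y, 2)] := by
      simp only [OrderMatching, List.forall_mem_cons]
      simp [hxy, hxy.le]
    exact orderMatching_iff_wordOrdIso.1 hmatch

theorem nonCrossing_iff : NonCrossing w ↔ ∀ x y, x < y → ¬ [x, y, x, y].Sublist w := by
  simp only [NonCrossing, PatAvoids, PatContains, wordOrdIso_1212_iff]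
  exact ⟨fun h x y hxy hs => h ⟨_, hs, x, y, hxy, rfl⟩, fun h ⟨_, hs, x, y, hxy, hw⟩ =>
    h x y hxy (hw ▸ hs)⟩

/-- A nonempty word is sum indecomposable if it cannot be cut into two nonempty parts such that
all letters of the first are smaller than all letters of the second. For restricted growth
functions this is connectedness, but it makes sense for any pattern. -/
def SumIndecomposable (p : List ℕ) : Prop :=
  p ≠ [] ∧ ∀ u v, p = u ++ v → u ≠ [] → v ≠ [] → ∃ x ∈ u, ∃ y ∈ v, y ≤ x

theorem sumIndecomposable_1212 : SumIndecomposable [1, 2, 1, 2] := by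
  refine ⟨by simp, ?_⟩
  rintro (_ | ⟨a, _ | ⟨b, _ | ⟨c, _ | ⟨d, u⟩⟩⟩⟩) v h hu hv
  · exact absurd rfl hu
  iterate 3
    · cases h
      simp
  · simp_all

theorem SumIndecomposable.connected (h : SumIndecomposable w) : Connected w := by
  refine ⟨h.1, ?_⟩
  rintro ⟨a, b, -, hb, hane, hbne, rfl⟩
  obtain ⟨x, hx, _, hy', hle⟩ := h.2 a _ rfl hane (by simpa using hbne)
  obtain ⟨y, hy, rfl⟩ := List.mem_map.1 hy'
  have := hb.pos hy
  have := le_nLetters hx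
  omega

theorem Connected.sumIndecomposable (hc : Connected w) (hw : IsRGF w) : SumIndecomposable w := by
  refine ⟨hc.1, ?_⟩
  rintro u v rfl hu hv
  by_contra! hlt
  obtain ⟨b, ha, hb, heq⟩ := hw.exists_eq_rgfComp hlt
  have hbne : b ≠ [] := by
    rintro rfl
    exact hv (by simpa [rgfComp] using heq)
  exact hc.2 ⟨u, b, ha, hb, hu, hbne, heq⟩

theorem SumIndecomposable.patContains_rgfComp_iff (hp : SumIndecomposable p) {a b : List ℕ}
    (hb : ∀ x ∈ b, 0 < x) : PatContains (rgfComp a b) p ↔ PatContains a p ∨ PatContains b p := by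
  have hshift : StrictMono (· + nLetters a) := strictMono_id.add_const _
  constructor
  · rw [patContains_iff_exists_orderMatching]
    rintro ⟨z, hz, hsub, rfl⟩
    obtain ⟨_, _, hcut, hsa, hsb⟩ := List.sublist_append_iff.1 hsub
    obtain ⟨za, zb, rfl, rfl, rfl⟩ := List.map_eq_append_iff.1 hcut
    rcases eq_or_ne za [] with rfl | hza
    · exact .inr ((patContains_map_left hshift).1
        (patContains_iff_exists_orderMatching.2 ⟨zb, hz, hsb, rfl⟩))
    rcases eq_or_ne zb [] with rfl | hzb
    · rw [List.append_nil] at hz ⊢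
      exact .inl (patContains_iff_exists_orderMatching.2 ⟨za, hz, hsa, rfl⟩)
    obtain ⟨_, hP', _, hQ', hle⟩ := hp.2 (za.map Prod.snd) (zb.map Prod.snd) List.map_append
      (by simpa using hza) (by simpa using hzb)
    obtain ⟨P, hP, rfl⟩ := List.mem_map.1 hP'
    obtain ⟨Q, hQ, rfl⟩ := List.mem_map.1 hQ'
    have hPa : P.1 ≤ nLetters a := le_nLetters (hsa.subset (List.mem_map_of_mem hP))
    obtain ⟨x, hx, hxQ⟩ := List.mem_map.1 (hsb.subset (List.mem_map_of_mem hQ))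
    have hPQ := hz P (List.mem_append_left _ hP) Q (List.mem_append_right _ hQ)
    have := hb x hx
    omega
  · rintro (h | h)
    · exact h.mono_left (List.sublist_append_left _ _)
    · exact ((patContains_map_left hshift).2 h).mono_left (List.sublist_append_right _ _)

theorem SumIndecomposable.patContains_rgfJoin_iff (hp : SumIndecomposable p) {l : List (List ℕ)}
    (hl : ∀ c ∈ l, ∀ x ∈ c, 0 < x) : PatContains (rgfJoin l) p ↔ ∃ c ∈ l, PatContains c p := by
  induction l with
  | nil =>
    refine iff_of_false ?_ (by simp)
    rintro ⟨s, hs, hlen, -⟩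
    rw [rgfJoin_nil, List.sublist_nil] at hs
    exact hp.1 (List.length_eq_zero_iff.1 (by rw [← hlen, hs, List.length_nil]))
  | cons c l ih =>
    have hl := (List.forall_mem_cons.1 hl).2
    rw [List.exists_mem_cons_iff, ← ih hl]
    exact hp.patContains_rgfComp_iff (pos_of_mem_rgfJoin hl)

end Containment

/-! ### The words `1[σ₁]1⋯1[σ_k]1` -/

section OnePat

variable {r s : ℕ} {l l₁ l₂ : List (List ℕ)}

theorem exists_eq_append_of_append_cons_eq {α : Type*} {a : α} {d e u v : List α}
    (h : d ++ a :: e = u ++ v) (ha : a ∉ u) : ∃ z, d = u ++ z ∧ v = z ++ a :: e := by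
  rcases List.append_eq_append_iff.1 h with ⟨z, rfl, hz⟩ | ⟨z, hd, hv⟩
  · cases z with
    | nil => exact ⟨[], by simp, by simpa using hz.symm⟩
    | cons x z =>
      obtain ⟨rfl, -⟩ := List.cons.inj hz
      exact absurd (by simp) ha
  · exact ⟨z, hd, hv⟩

theorem map_rgfJoin_cons (c : List ℕ) (l : List (List ℕ)) (s : ℕ) :
    (rgfJoin (c :: l)).map (· + s) =
      c.map (· + s) ++ (rgfJoin l).map (· + (s + nLetters c)) := by
  simp [rgfJoin_cons, Function.comp_def, add_comm, add_left_comm]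

theorem add_nLetters_rgfJoin_cons (c : List ℕ) (l : List (List ℕ)) (s : ℕ) :
    s + nLetters (rgfJoin (c :: l)) = s + nLetters c + nLetters (rgfJoin l) := by
  simp [nLetters_rgfJoin, add_assoc]

theorem notMem_map_add {a : ℕ} {c : List ℕ} (hs : a ≤ s) (hc : ∀ x ∈ c, 0 < x) :
    a ∉ c.map (· + s) := by
  intro h
  obtain ⟨x, hx, hxa⟩ := List.mem_map.1 h
  have := hc x hx
  omega

theorem exists_onePatAux_eq_cons (s : ℕ) (l : List (List ℕ)) : ∃ t, onePatAux s l = 1 :: t := by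
  cases l <;> exact ⟨_, rfl⟩

theorem exists_onePatAux_eq_concat (s : ℕ) (l : List (List ℕ)) :
    ∃ t, onePatAux s l = t ++ [1] := by
  induction l generalizing s with
  | nil => exact ⟨[], rfl⟩
  | cons c l ih =>
    obtain ⟨t, ht⟩ := ih (s + nLetters c)
    exact ⟨1 :: (c.map (· + s) ++ t), by simp [onePatAux, ht]⟩

theorem one_mem_onePatAux (s : ℕ) (l : List (List ℕ)) : 1 ∈ onePatAux s l := by
  cases l <;> simp [onePatAux]

theorem length_onePatAux (s : ℕ) (l : List (List ℕ)) :
    (onePatAux s l).length = 1 + l.length + (l.map List.length).sum := by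
  induction l generalizing s with
  | nil => rfl
  | cons c l ih => simp [onePatAux, ih]; omega

theorem filter_onePatAux (hs : 0 < s) (hl : ∀ c ∈ l, ∀ x ∈ c, 0 < x) :
    (onePatAux s l).filter (· ≠ 1) = (rgfJoin l).map (· + s) := by
  induction l generalizing s with
  | nil => simp [onePatAux, rgfJoin_nil]
  | cons c l ih =>
    obtain ⟨hc, hl⟩ := List.forall_mem_cons.1 hl
    have hcs : (c.map (· + s)).filter (· ≠ 1) = c.map (· + s) :=
      List.filter_eq_self.2 fun x hx => by
        simpa using ne_of_mem_of_not_mem hx (notMem_map_add hs hc)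
    rw [onePatAux, List.filter_cons_of_neg (by simp), List.filter_append, hcs,
      ih (Nat.add_pos_left hs _) hl, map_rgfJoin_cons]

theorem eq_one_or_lt_of_mem_onePatAux (hs : 0 < s) (hl : ∀ c ∈ l, ∀ x ∈ c, 0 < x) {x : ℕ}
    (hx : x ∈ onePatAux s l) : x = 1 ∨ s < x := by
  refine or_iff_not_imp_left.2 fun hx1 => ?_
  have hmem : x ∈ (onePatAux s l).filter (· ≠ 1) := by simpa [hx] using hx1
  rw [filter_onePatAux hs hl] at hmem
  obtain ⟨y, hy, rfl⟩ := List.mem_map.1 hmem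
  have := pos_of_mem_rgfJoin hl y hy
  omega

theorem rgfFrom_onePatAux (hs : 0 < s) (hl : ∀ c ∈ l, IsRGF c) : RGFFrom s (onePatAux s l) := by
  induction l generalizing s with
  | nil => simp [onePatAux, RGFFrom]
  | cons c l ih =>
    obtain ⟨hc, hl⟩ := List.forall_mem_cons.1 hl
    have hcs : RGFFrom s (c.map (· + s)) := by
      simpa using (rgfFrom_map_add_iff (m := s) hc.1).2 (isRGF_iff_rgfFrom.1 hc)
    refine ⟨one_pos, Nat.le_add_left 1 s, ?_⟩
    rw [max_eq_left hs, rgfFrom_append, max_nLetters_map_add]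
    exact ⟨hcs, ih (Nat.add_pos_left hs _) hl⟩

theorem isRGF_onePat (hl : ∀ c ∈ l, IsRGF c) : IsRGF (onePat l) := by
  obtain ⟨t, ht⟩ := exists_onePatAux_eq_cons 1 l
  have h := rgfFrom_onePatAux one_pos hl
  rw [ht] at h
  rw [isRGF_iff_rgfFrom, onePat, ht]
  exact ⟨one_pos, le_rfl, h.2.2⟩

theorem sumIndecomposable_onePat (l : List (List ℕ)) : SumIndecomposable (onePat l) := by
  obtain ⟨t, ht⟩ := exists_onePatAux_eq_cons 1 l
  obtain ⟨t', ht'⟩ := exists_onePatAux_eq_concat 1 l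
  refine ⟨by simp [onePat, ht], fun u v h hu hv => ?_⟩
  rw [onePat] at h
  obtain ⟨x, u', rfl⟩ := List.exists_cons_of_ne_nil hu
  obtain ⟨v', y, rfl⟩ := (List.eq_nil_or_concat' v).resolve_left hv
  obtain rfl : 1 = x := (List.cons.inj (ht.symm.trans h)).1
  rw [← List.append_assoc] at h
  obtain rfl : 1 = y := List.singleton_inj.1 (List.append_inj_right' (ht'.symm.trans h) rfl)
  exact ⟨1, by simp, 1, by simp, le_rfl⟩

theorem map_add_one_rgfJoin_sublist_onePat (hl : ∀ c ∈ l, ∀ x ∈ c, 0 < x) :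
    ((rgfJoin l).map (· + 1)).Sublist (onePat l) :=
  filter_onePatAux one_pos hl ▸ List.filter_sublist

theorem patContains_onePat_of_mem (hl : ∀ c ∈ l, ∀ x ∈ c, 0 < x) {c p : List ℕ} (hc : c ∈ l)
    (hp : PatContains c p) : PatContains (onePat l) p := by
  obtain ⟨s, hs⟩ := map_rgfJoin_sublist_of_mem hc
  have hmono (k : ℕ) : StrictMono (· + k) := strictMono_id.add_const k
  have hcl : PatContains (rgfJoin l) p := ((patContains_map_left (hmono s)).2 hp).mono_left hs
  exact ((patContains_map_left (hmono 1)).2 hcl).mono_left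
    (map_add_one_rgfJoin_sublist_onePat hl)

theorem SumIndecomposable.exists_patContains_of_notMem {p w : List ℕ} (hp : SumIndecomposable p)
    (hs : 0 < s) (hl : ∀ c ∈ l, ∀ x ∈ c, 0 < x) (hw : w.Sublist (onePatAux s l)) (h1 : 1 ∉ w)
    (hwp : WordOrdIso w p) : ∃ c ∈ l, PatContains c p := by
  have hfilter : w.filter (· ≠ 1) = w :=
    List.filter_eq_self.2 fun x hx => by simpa using ne_of_mem_of_not_mem hx h1
  have hsub := hw.filter (· ≠ 1)
  rw [hfilter, filter_onePatAux hs hl] at hsub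
  have hmono : StrictMono (· + s) := strictMono_id.add_const s
  exact (hp.patContains_rgfJoin_iff hl).1 ((patContains_map_left hmono).1 ⟨w, hsub, hwp⟩)

theorem map_rgfJoin_append_sublist_onePatAux (r : ℕ) (l₁ l₂ : List (List ℕ)) :
    ((rgfJoin l₁).map (· + r) ++ onePatAux (r + nLetters (rgfJoin l₁)) l₂).Sublist
      (onePatAux r (l₁ ++ l₂)) := by
  induction l₁ generalizing r with
  | nil => exact List.Sublist.refl _
  | cons c l ih =>
    rw [List.cons_append, onePatAux, map_rgfJoin_cons, List.append_assoc,
      add_nLetters_rgfJoin_cons]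
    exact ((ih (r + nLetters c)).append_left (c.map (· + r))).cons 1

theorem cons_map_rgfJoin_append_sublist_onePatAux (r : ℕ) (h : l₁ ≠ []) (l₂ : List (List ℕ)) :
    (1 :: ((rgfJoin l₁).map (· + r) ++ onePatAux (r + nLetters (rgfJoin l₁)) l₂)).Sublist
      (onePatAux r (l₁ ++ l₂)) := by
  obtain ⟨c, l, rfl⟩ := List.exists_cons_of_ne_nil h
  rw [List.cons_append, onePatAux, map_rgfJoin_cons, List.append_assoc, add_nLetters_rgfJoin_cons]
  exact ((map_rgfJoin_append_sublist_onePatAux _ l l₂).append_left (c.map (· + r))).cons_cons 1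

theorem exists_split_of_sublist_onePatAux {d e : List ℕ} (hr : 0 < r)
    (hl : ∀ c ∈ l, ∀ x ∈ c, 0 < x) (hd : 1 ∉ d)
    (h : (1 :: (d ++ 1 :: e)).Sublist (onePatAux r l)) :
    ∃ l₁ l₂, l = l₁ ++ l₂ ∧ l₁ ≠ [] ∧ d.Sublist ((rgfJoin l₁).map (· + r)) ∧
      (1 :: e).Sublist (onePatAux (r + nLetters (rgfJoin l₁)) l₂) := by
  induction l generalizing r d with
  | nil => simpa [onePatAux] using h.length_le
  | cons c l ih =>
    obtain ⟨hc, hl⟩ := List.forall_mem_cons.1 hl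
    rw [onePatAux, List.cons_sublist_cons, List.sublist_append_iff] at h
    obtain ⟨u, v, huv, hu, hv⟩ := h
    have hu1 : 1 ∉ u := fun h1 => notMem_map_add hr hc (hu.subset h1)
    obtain ⟨z, rfl, rfl⟩ := exists_eq_append_of_append_cons_eq huv hu1
    rcases z with _ | ⟨x, z⟩
    · exact ⟨[c], l, rfl, by simp, by simpa [rgfJoin_cons, rgfJoin_nil] using hu,
        by simpa [rgfJoin_cons, rgfJoin_nil] using hv⟩
    · obtain ⟨t, ht⟩ := exists_onePatAux_eq_cons (r + nLetters c) l
      have hx : x ≠ 1 := by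
        rintro rfl
        exact hd (by simp)
      have hv' : (1 :: (x :: z ++ 1 :: e)).Sublist (onePatAux (r + nLetters c) l) := by
        rw [ht] at hv ⊢
        exact (List.Sublist.of_cons_of_ne hx hv).cons_cons 1
      obtain ⟨l₁, l₂, rfl, -, hd₁, he⟩ := ih (Nat.add_pos_left hr _) hl
        (fun h1 => hd (List.mem_append_right u h1)) hv'
      refine ⟨c :: l₁, l₂, rfl, by simp, ?_, ?_⟩
      · rw [map_rgfJoin_cons]
        exact hu.append hd₁
      · rwa [add_nLetters_rgfJoin_cons]

theorem onePatAux_injective {l' : List (List ℕ)} (hs : 0 < s) (hl : ∀ c ∈ l, ∀ x ∈ c, 0 < x)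
    (hl' : ∀ c ∈ l', ∀ x ∈ c, 0 < x) (h : onePatAux s l = onePatAux s l') : l = l' := by
  induction l generalizing l' s with
  | nil =>
    cases l' with
    | nil => rfl
    | cons c' l' =>
      have := congrArg List.length h
      simp only [length_onePatAux, List.length_cons, List.length_nil, List.map_nil,
        List.sum_nil] at this
      omega
  | cons c l ih =>
    cases l' with
    | nil =>
      have := congrArg List.length h
      simp only [length_onePatAux, List.length_cons, List.length_nil, List.map_nil,
        List.sum_nil] at this
      omega
    | cons c' l' =>
      obtain ⟨hc, hcl⟩ := List.forall_mem_cons.1 hl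
      obtain ⟨hc', hcl'⟩ := List.forall_mem_cons.1 hl'
      obtain ⟨t, ht⟩ := exists_onePatAux_eq_cons (s + nLetters c) l
      obtain ⟨t', ht'⟩ := exists_onePatAux_eq_cons (s + nLetters c') l'
      have htail := (List.cons.inj h).2
      rw [ht, ht'] at htail
      obtain ⟨z, hz, hzt⟩ := exists_eq_append_of_append_cons_eq htail (notMem_map_add hs hc')
      have hcc' : c.map (· + s) = c'.map (· + s) := by
        rcases z with _ | ⟨x, z⟩
        · rw [hz, List.append_nil]
        · obtain ⟨rfl, -⟩ := List.cons.inj hzt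
          exact absurd (by simp [hz]) (notMem_map_add hs hc)
      obtain rfl := List.map_injective_iff.2 (add_left_injective s) hcc'
      exact congrArg _ (ih (Nat.add_pos_left hs _) hcl hcl'
        (List.append_cancel_left (List.cons.inj h).2))

theorem onePat_injOn : Set.InjOn onePat {l | ∀ c ∈ l, ∀ x ∈ c, 0 < x} :=
  fun _ hl _ hl' h => onePatAux_injective one_pos hl hl' h

theorem SumIndecomposable.prefix_of_append_eq {c c' u u' : List ℕ} (hc' : SumIndecomposable c')
    (hc : c ≠ []) (hlt : ∀ x ∈ c, ∀ y ∈ u, x < y) (h : c ++ u = c' ++ u') : c' <+: c := by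
  rcases List.append_eq_append_iff.1 h with ⟨z, rfl, hz⟩ | ⟨z, rfl, -⟩
  · rcases eq_or_ne z [] with rfl | hz0
    · simp
    obtain ⟨x, hx, y, hy, hle⟩ := hc'.2 c z rfl hc hz0
    have := hlt x hx y (hz ▸ List.mem_append_left _ hy)
    omega
  · exact List.prefix_append _ _

theorem rgfJoin_injOn :
    Set.InjOn rgfJoin {l | ∀ c ∈ l, SumIndecomposable c ∧ ∀ x ∈ c, 0 < x} := by
  have hlt {c : List ℕ} {l : List (List ℕ)} (hl : ∀ d ∈ l, ∀ x ∈ d, 0 < x) :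
      ∀ x ∈ c, ∀ y ∈ (rgfJoin l).map (· + nLetters c), x < y := by
    intro x hx _ hy
    obtain ⟨z, hz, rfl⟩ := List.mem_map.1 hy
    have := pos_of_mem_rgfJoin hl z hz
    have := le_nLetters hx
    omega
  intro l hl l' hl' h
  induction l generalizing l' with
  | nil =>
    cases l' with
    | nil => rfl
    | cons c' l' =>
      exact absurd (List.append_eq_nil_iff.1 h.symm).1 (hl' c' List.mem_cons_self).1.1
  | cons c l ih =>
    cases l' with
    | nil => exact absurd (List.append_eq_nil_iff.1 h).1 (hl c List.mem_cons_self).1.1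
    | cons c' l' =>
      obtain ⟨hc, hcl⟩ := List.forall_mem_cons.1 hl
      obtain ⟨hc', hcl'⟩ := List.forall_mem_cons.1 hl'
      have hpre := hc'.1.prefix_of_append_eq hc.1.1 (hlt fun d hd => (hcl d hd).2) h
      have hpre' := hc.1.prefix_of_append_eq hc'.1.1 (hlt fun d hd => (hcl' d hd).2) h.symm
      obtain rfl := hpre.eq_of_length_le hpre'.length_le
      exact congrArg _ (ih hcl hcl'
        (List.map_injective_iff.2 (add_left_injective _) (List.append_cancel_left h)))

end OnePat

/-! ### Occurrences of one word `1[σ₁]1⋯1[σ_k]1` in another -/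

section OnePatInOnePat

variable {r r' : ℕ} {c p w : List ℕ} {l s : List (List ℕ)}

/-- The nonempty lists of words whose join contains the pattern `c`, as a language over the
alphabet of all words. -/
def joinLang (c : List ℕ) : Language (List ℕ) := {l | l ≠ [] ∧ PatContains (rgfJoin l) c}

/-- The lists of words that can be cut into consecutive nonempty blocks, followed by a remainder,
such that the join of the `i`-th block contains the `i`-th pattern of `s`. -/
def factorizationLang (s : List (List ℕ)) : Language (List ℕ) := (s.map joinLang).prod * ⊤

theorem factorizationLang_cons (c : List ℕ) (s : List (List ℕ)) :
    factorizationLang (c :: s) = joinLang c * factorizationLang s := by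
  rw [factorizationLang, List.map_cons, List.prod_cons, mul_assoc, factorizationLang]

theorem top_mul_joinLang_le (c : List ℕ) : ⊤ * joinLang c ≤ joinLang c := by
  rintro _ ⟨u, -, v, ⟨hv, hvc⟩, rfl⟩
  refine ⟨List.append_ne_nil_of_right_ne_nil u hv, ?_⟩
  have hmono : StrictMono (· + nLetters (rgfJoin u)) := strictMono_id.add_const _
  rw [rgfJoin_append]
  exact ((patContains_map_left hmono).2 hvc).mono_left (List.sublist_append_right _ _)

theorem joinLang_mul_top_le (c : List ℕ) : joinLang c * ⊤ ≤ joinLang c := by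
  rintro _ ⟨u, ⟨hu, huc⟩, v, -, rfl⟩
  refine ⟨List.append_ne_nil_of_left_ne_nil hu v, ?_⟩
  rw [rgfJoin_append]
  exact huc.mono_left (List.sublist_append_left _ _)

/-- An occurrence of the pattern `p` in the word `w` in which the letter `1` of `p` is played by
the letter `1` of `w`. -/
def PatContainsAtOne (w p : List ℕ) : Prop :=
  ∃ z, OrderMatching z ∧ (1, 1) ∈ z ∧ (z.map Prod.fst).Sublist w ∧ z.map Prod.snd = p

theorem PatContainsAtOne.patContains (h : PatContainsAtOne w p) : PatContains w p := by
  obtain ⟨z, hz, -, hsub, hsnd⟩ := h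
  exact patContains_iff_exists_orderMatching.2 ⟨z, hz, hsub, hsnd⟩

theorem patContainsAtOne_singleton (h : 1 ∈ w) : PatContainsAtOne w [1] :=
  ⟨[(1, 1)], by simp [OrderMatching], by simp, by simpa using h, rfl⟩

theorem PatContainsAtOne.exists_split (hr : 0 < r) (hr' : 0 < r')
    (hl : ∀ c ∈ l, ∀ x ∈ c, 0 < x) (hc : ∀ x ∈ c, 0 < x)
    (h : PatContainsAtOne (onePatAux r l) (onePatAux r' (c :: s))) :
    ∃ l₁ ∈ joinLang c, ∃ l₂, l₁ ++ l₂ = l ∧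
      PatContainsAtOne (onePatAux (r + nLetters (rgfJoin l₁)) l₂)
        (onePatAux (r' + nLetters c) s) := by
  obtain ⟨z, hz, h1, hsub, hsnd⟩ := h
  obtain ⟨t, ht⟩ := exists_onePatAux_eq_cons (r' + nLetters c) s
  have hone : ∀ P ∈ z, P.1 = 1 ↔ P.2 = 1 := fun P hP => hz.fst_eq_iff hP h1
  rw [onePatAux, ht] at hsnd
  obtain ⟨⟨x, _⟩, z, rfl, rfl, hsnd'⟩ := List.map_eq_cons_iff.1 hsnd
  obtain ⟨zc, z', rfl, hzc, hz'⟩ := List.map_eq_append_iff.1 hsnd'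
  obtain ⟨⟨y, _⟩, zt, rfl, rfl, rfl⟩ := List.map_eq_cons_iff.1 hz'
  obtain rfl : x = 1 := (hone (x, 1) (by simp)).2 rfl
  obtain rfl : y = 1 := (hone (y, 1) (by simp)).2 rfl
  have hd : 1 ∉ zc.map Prod.fst := by
    intro hmem
    obtain ⟨P, hP, hP1⟩ := List.mem_map.1 hmem
    refine notMem_map_add hr' hc (hzc ▸ List.mem_map.2 ⟨P, hP, (hone P ?_).1 hP1⟩)
    simp [hP]
  obtain ⟨l₁, l₂, rfl, hl₁, hd₁, he⟩ := exists_split_of_sublist_onePatAux hr hl hd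
    (by simpa using hsub)
  have hzc' : OrderMatching zc := hz.of_subset (by simp)
  have hocc : PatContains ((rgfJoin l₁).map (· + r)) (c.map (· + r')) :=
    patContains_iff_exists_orderMatching.2 ⟨zc, hzc', hd₁, hzc⟩
  have hmono (k : ℕ) : StrictMono (· + k) := strictMono_id.add_const k
  refine ⟨l₁, ⟨hl₁, ((patContains_map_left (hmono r)).1 hocc).of_map_right (hmono r')⟩, l₂, rfl,
    (1, 1) :: zt, hz.of_subset ?_, List.mem_cons_self, he, ht.symm⟩
  exact List.Subset.trans (List.subset_append_right _ _) (List.subset_cons_self _ _)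

theorem PatContainsAtOne.cons {l₁ l₂ : List (List ℕ)} (hr : 0 < r) (hr' : 0 < r')
    (hl₁ : ∀ d ∈ l₁, ∀ x ∈ d, 0 < x) (hl₂ : ∀ d ∈ l₂, ∀ x ∈ d, 0 < x) (hc : ∀ x ∈ c, 0 < x)
    (hs : ∀ d ∈ s, ∀ x ∈ d, 0 < x) (hocc : l₁ ∈ joinLang c)
    (h : PatContainsAtOne (onePatAux (r + nLetters (rgfJoin l₁)) l₂)
      (onePatAux (r' + nLetters c) s)) :
    PatContainsAtOne (onePatAux r (l₁ ++ l₂)) (onePatAux r' (c :: s)) := by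
  obtain ⟨z', hz', h1, hsub', hsnd'⟩ := h
  obtain ⟨zc, hzc, hsub, rfl⟩ := patContains_iff_exists_orderMatching.1 hocc.2
  have hrest : ∀ Q ∈ z', (Q.1 = 1 ∨ r + nLetters (rgfJoin l₁) < Q.1) ∧
      (Q.2 = 1 ∨ r' + nLetters (zc.map Prod.snd) < Q.2) ∧ (Q.1 = 1 ↔ Q.2 = 1) := fun Q hQ =>
    ⟨eq_one_or_lt_of_mem_onePatAux (Nat.add_pos_left hr _) hl₂
      (hsub'.subset (List.mem_map_of_mem hQ)),
    eq_one_or_lt_of_mem_onePatAux (Nat.add_pos_left hr' _) hs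
      (hsnd' ▸ List.mem_map_of_mem hQ), hz'.fst_eq_iff hQ h1⟩
  let shift : ℕ × ℕ → ℕ × ℕ := Prod.map (· + r) (· + r')
  have hshift : OrderMatching (zc.map shift) := by
    simpa only [OrderMatching, List.forall_mem_map, shift, Prod.map_fst, Prod.map_snd,
      Nat.add_lt_add_iff_right] using hzc
  have hglue : OrderMatching (zc.map shift ++ z') := by
    refine hshift.append hz' (List.forall_mem_map.2 fun P hP Q hQ => ?_)
    have hP₁ := hsub.subset (List.mem_map_of_mem hP)
    have hP₂ := List.mem_map_of_mem (f := Prod.snd) hP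
    have := pos_of_mem_rgfJoin hl₁ _ hP₁
    have := le_nLetters hP₁
    have := hc _ hP₂
    have := le_nLetters hP₂
    have := hrest Q hQ
    simp only [shift, Prod.map_fst, Prod.map_snd]
    omega
  refine ⟨(1, 1) :: (zc.map shift ++ z'), hglue.of_subset (by simp [h1]), List.mem_cons_self,
    ?_, ?_⟩
  · refine .trans ?_ (cons_map_rgfJoin_append_sublist_onePatAux r hocc.1 l₂)
    have hshift_fst : (zc.map shift).map Prod.fst = (zc.map Prod.fst).map (· + r) := by
      simp [shift, Function.comp_def]
    rw [List.map_cons, List.map_append, hshift_fst]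
    exact ((hsub.map (· + r)).append hsub').cons_cons 1
  · simp [onePatAux, hsnd', shift, Function.comp_def]

theorem patContainsAtOne_onePatAux_iff (hr : 0 < r) (hr' : 0 < r')
    (hl : ∀ c ∈ l, ∀ x ∈ c, 0 < x) (hs : ∀ c ∈ s, ∀ x ∈ c, 0 < x) :
    PatContainsAtOne (onePatAux r l) (onePatAux r' s) ↔ l ∈ factorizationLang s := by
  induction s generalizing r r' l with
  | nil =>
    refine iff_of_true (patContainsAtOne_singleton (one_mem_onePatAux r l)) ?_
    rw [factorizationLang, List.map_nil, List.prod_nil, one_mul]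
    trivial
  | cons c s ih =>
    obtain ⟨hc, hs⟩ := List.forall_mem_cons.1 hs
    rw [factorizationLang_cons, Language.mem_mul]
    constructor
    · intro h
      obtain ⟨l₁, hl₁, l₂, rfl, h₂⟩ := h.exists_split hr hr' hl hc
      exact ⟨l₁, hl₁, l₂, (ih (Nat.add_pos_left hr _) (Nat.add_pos_left hr' _)
        (List.forall_mem_append.1 hl).2 hs).1 h₂, rfl⟩
    · rintro ⟨l₁, hl₁, l₂, hl₂, rfl⟩
      obtain ⟨hpos₁, hpos₂⟩ := List.forall_mem_append.1 hl
      exact .cons hr hr' hpos₁ hpos₂ hc hs hl₁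
        ((ih (Nat.add_pos_left hr _) (Nat.add_pos_left hr' _) hpos₂ hs).2 hl₂)

theorem PatContains.patContainsAtOne_or_exists (hw : ∀ x ∈ w, 0 < x) (hp : ∀ x ∈ p, 0 < x)
    (h1 : 1 ∈ p) (h : PatContains w p) :
    PatContainsAtOne w p ∨ ∃ v, v.Sublist w ∧ 1 ∉ v ∧ WordOrdIso v p := by
  obtain ⟨z, hz, hsub, rfl⟩ := patContains_iff_exists_orderMatching.1 h
  by_cases hz1 : 1 ∈ z.map Prod.fst
  · obtain ⟨⟨_, y⟩, hP, rfl⟩ := List.mem_map.1 hz1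
    obtain ⟨⟨x, _⟩, hQ, rfl⟩ := List.mem_map.1 h1
    have hx : 0 < x := hw x (hsub.subset (List.mem_map_of_mem hQ))
    have hy : 0 < y := hp y (List.mem_map_of_mem hP)
    have hlt : x < 1 ↔ 1 < y := hz _ hQ _ hP
    obtain rfl : y = 1 := by omega
    exact .inl ⟨z, hz, hP, hsub, rfl⟩
  · exact .inr ⟨_, hsub, hz1, orderMatching_iff_wordOrdIso.1 hz⟩

theorem patContains_onePat_onePat_iff (hl : ∀ c ∈ l, ∀ x ∈ c, 0 < x)
    (hs : ∀ c ∈ s, ∀ x ∈ c, 0 < x) : PatContains (onePat l) (onePat s) ↔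
      (∃ c ∈ l, PatContains c (onePat s)) ∨ l ∈ factorizationLang s := by
  rw [← patContainsAtOne_onePatAux_iff one_pos one_pos hl hs]
  constructor
  · intro h
    have hpos {l : List (List ℕ)} (hl : ∀ c ∈ l, ∀ x ∈ c, 0 < x) : ∀ x ∈ onePat l, 0 < x :=
      fun x hx => by
        have := eq_one_or_lt_of_mem_onePatAux one_pos hl hx
        omega
    rcases h.patContainsAtOne_or_exists (hpos hl) (hpos hs) (one_mem_onePatAux 1 s) with
      hone | ⟨v, hv, h1, hvs⟩
    · exact .inr hone
    · exact .inl ((sumIndecomposable_onePat s).exists_patContains_of_notMem one_pos hl hv h1 hvs)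
  · rintro (⟨c, hc, hcs⟩ | h)
    · exact patContains_onePat_of_mem hl hc hcs
    · exact h.patContains

end OnePatInOnePat

/-! ### The structure of non-crossing restricted growth functions -/

section NonCrossing

variable {s : ℕ} {l : List (List ℕ)} {r w : List ℕ}

theorem nonCrossing_rgfJoin_iff (hl : ∀ c ∈ l, ∀ x ∈ c, 0 < x) :
    NonCrossing (rgfJoin l) ↔ ∀ c ∈ l, NonCrossing c := by
  simp [NonCrossing, PatAvoids, sumIndecomposable_1212.patContains_rgfJoin_iff hl]

theorem not_alternating_sublist_onePat (hl : ∀ c ∈ l, ∀ x ∈ c, 0 < x) {y : ℕ} (hy : y ≠ 1) :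
    ¬ [1, y, 1, y].Sublist (onePat l) := by
  intro h
  obtain ⟨l₁, l₂, rfl, -, h₁, h₂⟩ := exists_split_of_sublist_onePatAux (d := [y]) (e := [y])
    one_pos hl (by simpa using hy.symm) h
  obtain ⟨x, hx, rfl⟩ := List.mem_map.1 (h₁.subset List.mem_cons_self)
  have := le_nLetters hx
  have := eq_one_or_lt_of_mem_onePatAux (by omega) (List.forall_mem_append.1 hl).2
    (h₂.subset (by simp : x + 1 ∈ [1, x + 1]))
  omega

theorem nonCrossing_onePat_iff (hl : ∀ c ∈ l, ∀ x ∈ c, 0 < x) :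
    NonCrossing (onePat l) ↔ ∀ c ∈ l, NonCrossing c := by
  refine ⟨fun h c hc hcross => h (patContains_onePat_of_mem hl hc hcross), ?_⟩
  rintro h ⟨v, hv, hiso⟩
  by_cases h1 : 1 ∈ v
  · obtain ⟨x, y, hxy, rfl⟩ := wordOrdIso_1212_iff.1 hiso
    have hx : 0 < x := (eq_one_or_lt_of_mem_onePatAux one_pos hl
      (hv.subset List.mem_cons_self)).elim (by omega) (by omega)
    obtain rfl : x = 1 := by
      simp only [List.mem_cons, List.not_mem_nil, or_false] at h1
      omega
    exact not_alternating_sublist_onePat hl hxy.ne' hv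
  · obtain ⟨c, hc, hcross⟩ :=
      sumIndecomposable_1212.exists_patContains_of_notMem one_pos hl hv h1 hiso
    exact h c hc hcross

theorem NonCrossing.sublist {v : List ℕ} (h : NonCrossing w) (hv : v.Sublist w) : NonCrossing v :=
  fun hcross => h (hcross.mono_left hv)

theorem NonCrossing.lt_of_mem_of_one_lt {u v : List ℕ} (hnc : NonCrossing (1 :: (u ++ 1 :: v)))
    (hu : RGFFrom s u) {x : ℕ} (hx : x ∈ v) (hx1 : 1 < x) (hsx : s < x) : nLetters u < x := by
  by_contra! hle
  have hxu : [x].Sublist u := List.singleton_sublist.2 (hu.mem_of_le_nLetters hsx hle)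
  have hxv : [x].Sublist v := List.singleton_sublist.2 hx
  exact nonCrossing_iff.1 hnc 1 x hx1 ((hxu.append (hxv.cons_cons 1)).cons_cons 1)

/-- The word is cut at its letters `1`: a letter between two consecutive `1`s cannot occur later,
since it would cross the second `1`. -/
theorem NonCrossing.exists_eq_onePatAux_append (hs : 0 < s) (hr : RGFFrom s r)
    (hr1 : ∀ x ∈ r, x = 1 ∨ s < x) (hnc : NonCrossing (1 :: r)) :
    ∃ l v, (∀ c ∈ l, IsRGF c) ∧ (∀ y ∈ v, s < y ∧ ∀ x ∈ onePatAux s l, x < y) ∧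
      1 :: r = onePatAux s l ++ v := by
  induction hn : r.length using Nat.strong_induction_on generalizing r s with
  | _ n ih =>
    subst hn
    have hgt : ∀ x ∈ r, x ≠ 1 → s < x := fun x hx hx1 => (hr1 x hx).resolve_left hx1
    by_cases h1 : 1 ∈ r
    · obtain ⟨u, r', rfl, hu1⟩ := List.eq_append_cons_of_mem h1
      obtain ⟨c, hc, rfl⟩ := exists_pos_map_add_eq (m := s) (w := u) fun x hx =>
        hgt x (List.mem_append_left _ hx) (ne_of_mem_of_not_mem hx hu1)
      obtain ⟨hu, -, -, hr'⟩ := rgfFrom_append.1 hr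
      have hcr : IsRGF c := by
        rw [← zero_add s] at hu
        exact isRGF_iff_rgfFrom.2 ((rgfFrom_map_add_iff hc).1 (by simpa using hu))
      rw [max_nLetters_map_add, max_eq_left (by omega)] at hr'
      have hr1' : ∀ x ∈ r', x = 1 ∨ s + nLetters c < x := by
        refine fun x hx => or_iff_not_imp_left.2 fun hx1 => ?_
        have hsx : s < x := hgt x (by simp [hx]) hx1
        have := hnc.lt_of_mem_of_one_lt hu hx (by omega) hsx
        have := max_nLetters_map_add c s
        omega
      obtain ⟨l, v, hl, hv, heq⟩ := ih r'.length (by simp; omega) (Nat.add_pos_left hs _) hr' hr1'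
        (hnc.sublist ((List.sublist_append_right _ _).cons 1)) rfl
      refine ⟨c :: l, v, List.forall_mem_cons.2 ⟨hcr, hl⟩, fun y hy => ?_, by simp [onePatAux, heq]⟩
      obtain ⟨hsy, hlt⟩ := hv y hy
      simp only [onePatAux, List.forall_mem_cons, List.forall_mem_append, List.forall_mem_map]
      refine ⟨by omega, by omega, fun x hx => ?_, hlt⟩
      have := le_nLetters hx
      omega
    · refine ⟨[], r, by simp, fun y hy => ?_, rfl⟩
      have := hgt y hy (ne_of_mem_of_not_mem hy h1)
      exact ⟨this, by simp [onePatAux]; omega⟩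

theorem Connected.exists_eq_onePat (hc : Connected w) (hw : IsRGF w) (hnc : NonCrossing w) :
    ∃ l, (∀ c ∈ l, IsRGF c ∧ NonCrossing c) ∧ onePat l = w := by
  obtain ⟨x, r, rfl⟩ := List.exists_cons_of_ne_nil hc.1
  obtain ⟨hx, hx1, hr⟩ := isRGF_iff_rgfFrom.1 hw
  obtain rfl : x = 1 := by omega
  have hr1 : ∀ y ∈ r, y = 1 ∨ 1 < y := fun y hy => by
    have := hw.pos (List.mem_cons_of_mem 1 hy)
    omega
  obtain ⟨l, v, hl, hv, heq⟩ := hnc.exists_eq_onePatAux_append one_pos hr hr1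
  obtain rfl : v = [] := by
    by_contra hne
    obtain ⟨y, hy, z, hz, hle⟩ := (hc.sumIndecomposable hw).2 (onePatAux 1 l) v heq
      (List.ne_nil_of_mem (one_mem_onePatAux 1 l)) hne
    exact hle.not_gt ((hv z hz).2 y hy)
  rw [List.append_nil] at heq
  rw [heq] at hnc
  have hl' := (nonCrossing_onePat_iff fun c hc => (hl c hc).1).1 hnc
  exact ⟨l, fun c hc => ⟨hl c hc, hl' c hc⟩, heq.symm⟩

end NonCrossing

/-! ### Swapping two neighbouring patterns -/

section Swap

variable {m k : ℕ} {a w : List ℕ}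

theorem RGFFrom.range'_sublist (h : RGFFrom m w) (hk : m + k ≤ max m (nLetters w)) :
    (List.range' (m + 1) k).Sublist w := by
  induction w generalizing m k with
  | nil =>
    obtain rfl : k = 0 := by simpa [nLetters_nil] using hk
    simp
  | cons x w ih =>
    obtain ⟨-, hxm, hw⟩ := h
    rw [nLetters_cons] at hk
    by_cases hx : x = m + 1
    · subst hx
      rw [max_eq_right (Nat.le_succ m)] at hw
      cases k with
      | zero => simp
      | succ k =>
        rw [List.range'_succ]
        exact (ih hw (by omega)).cons_cons (m + 1)
    · rw [max_eq_left (by omega)] at hw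
      exact (ih hw (by omega)).cons x

theorem RGFFrom.eq_range'_of_nodup (h : RGFFrom m w) (hw : w.Nodup) (hm : ∀ x ∈ w, m < x) :
    w = List.range' (m + 1) w.length := by
  induction w generalizing m with
  | nil => rfl
  | cons x w ih =>
    obtain ⟨-, hxm, hrw⟩ := h
    obtain ⟨hmx, hmw⟩ := List.forall_mem_cons.1 hm
    obtain ⟨hxw, hnodup⟩ := List.nodup_cons.1 hw
    obtain rfl : x = m + 1 := by omega
    rw [max_eq_right (Nat.le_succ m)] at hrw
    have hgt : ∀ y ∈ w, m + 1 < y := fun y hy =>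
      lt_of_le_of_ne (hmw y hy) (ne_of_mem_of_not_mem hy hxw).symm
    rw [List.length_cons, List.range'_succ, ← ih hrw hnodup hgt]

theorem PatContains.length_le_nLetters (h : PatContains w a) (hw : ∀ x ∈ w, 0 < x)
    (ha : a.Nodup) : a.length ≤ nLetters w := by
  obtain ⟨z, hz, hsub, rfl⟩ := patContains_iff_exists_orderMatching.1 h
  have hnodup : (z.map Prod.fst).Nodup :=
    (List.Nodup.of_map _ ha).map_on fun P hP Q hQ heq =>
      Prod.ext heq ((hz.fst_eq_iff hP hQ).1 heq)
  have hsubset : z.map Prod.fst ⊆ List.range' 1 (nLetters w) := fun x hx => by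
    have := hw x (hsub.subset hx)
    have := le_nLetters (hsub.subset hx)
    rw [List.mem_range'_1]
    omega
  simpa using (List.subperm_of_subset hnodup hsubset).length_le

theorem IsRGF.patContains_iff_of_nodup (ha : IsRGF a) (hnodup : a.Nodup) (hw : IsRGF w) :
    PatContains w a ↔ a.length ≤ nLetters w := by
  refine ⟨fun h => h.length_le_nLetters hw.1 hnodup, fun h => ?_⟩
  rw [(isRGF_iff_rgfFrom.1 ha).eq_range'_of_nodup hnodup ha.1]
  exact .of_sublist ((isRGF_iff_rgfFrom.1 hw).range'_sublist (by simpa using h))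

theorem reverse_mem_joinLang_iff (ha : IsRGF a) (hq : a = [] ∨ Connected a ∨ a.Nodup)
    {l : List (List ℕ)} (hl : ∀ c ∈ l, IsRGF c) : l.reverse ∈ joinLang a ↔ l ∈ joinLang a := by
  have hl' : ∀ c ∈ l.reverse, IsRGF c := fun c hc => hl c (List.mem_reverse.1 hc)
  refine and_congr List.reverse_eq_nil_iff.not ?_
  have hdistinct (h : a.Nodup) :
      PatContains (rgfJoin l.reverse) a ↔ PatContains (rgfJoin l) a := by
    rw [ha.patContains_iff_of_nodup h (isRGF_rgfJoin hl),
      ha.patContains_iff_of_nodup h (isRGF_rgfJoin hl'), nLetters_rgfJoin, nLetters_rgfJoin,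
      List.map_reverse, List.sum_reverse]
  rcases hq with rfl | hconn | hnodup
  · exact hdistinct List.nodup_nil
  · have hsum := hconn.sumIndecomposable ha
    rw [hsum.patContains_rgfJoin_iff fun c hc => (hl c hc).1,
      hsum.patContains_rgfJoin_iff fun c hc => (hl' c hc).1]
    simp
  · exact hdistinct hnodup

theorem factorizationLang_append (s t : List (List ℕ)) :
    factorizationLang (s ++ t) = (s.map joinLang).prod * factorizationLang t := by
  simp [factorizationLang, mul_assoc]

theorem rearrangeEquivOn_factorizationLang_swap (ha : IsRGF a)
    (hq : a = [] ∨ Connected a ∨ a.Nodup) (pre post : List (List ℕ)) (b : List ℕ) :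
    RearrangeEquivOn {c | IsRGF c} (factorizationLang (pre ++ [a, b] ++ post))
      (factorizationLang (pre ++ [b, a] ++ post)) := by
  have hideal (c d : List ℕ) :
      ⊤ * (joinLang c * joinLang d * factorizationLang post) ≤
        joinLang c * joinLang d * factorizationLang post := by
    rw [mul_assoc]
    exact top_mul_mul_le (top_mul_joinLang_le c) _
  have hswap : RearrangeEquivOn {c | IsRGF c} (joinLang a * joinLang b)
      (joinLang b * joinLang a) :=
    .mul_comm (fun l hl => reverse_mem_joinLang_iff ha hq hl) (top_mul_joinLang_le b)
      (joinLang_mul_top_le b)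
  have hfactor := (hswap.mul_right (mul_mul_top_le (joinLang_mul_top_le b) _)
    (mul_mul_top_le (joinLang_mul_top_le a) _) (factorizationLang post)).mul_left
      (hideal a b) (hideal b a) (pre.map joinLang).prod
  simpa only [List.append_assoc, List.cons_append, List.nil_append, factorizationLang_append,
    factorizationLang_cons, ← mul_assoc] using hfactor

end Swap

/-! ### Permutations that match two families of fibres -/

section FiberPerm

variable {α β : Type*} {f : α → β} {S T A B : Set α}

theorem ncard_eq_of_perm (e : Equiv.Perm α) (h : ∀ x, e x ∈ T ↔ x ∈ S) : S.ncard = T.ncard :=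
  Set.ncard_congr' (e.subtypeEquiv fun x => (h x).symm)

theorem exists_equiv_of_ncard_fiber_eq (hS : ∀ b, (S ∩ f ⁻¹' {b}).Finite)
    (hT : ∀ b, (T ∩ f ⁻¹' {b}).Finite)
    (h : ∀ b, (S ∩ f ⁻¹' {b}).ncard = (T ∩ f ⁻¹' {b}).ncard) :
    ∃ φ : S ≃ T, ∀ x, f (φ x) = f x := by
  let fS (x : S) : β := f x
  let fT (y : T) : β := f y
  have hfiber (b : β) : Nonempty ({x // fS x = b} ≃ {y // fT y = b}) := by
    have := (hS b).to_subtype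
    have := (hT b).to_subtype
    exact ⟨(Equiv.subtypeSubtypeEquivSubtypeInter (· ∈ S) (f · = b)).trans
      ((Finite.card_eq.1 (h b)).some.trans
        (Equiv.subtypeSubtypeEquivSubtypeInter (· ∈ T) (f · = b)).symm)⟩
  let φ (b : β) := (hfiber b).some
  exact ⟨Equiv.ofFiberEquiv φ, Equiv.ofFiberEquiv_map φ⟩

open scoped Classical in
theorem exists_perm_exchanging (hST : Disjoint S T) (φ : S ≃ T) : ∃ e : Equiv.Perm α,
    (∀ x : S, e x = φ x) ∧ (∀ y : T, e y = φ.symm y) ∧ ∀ x ∉ S ∪ T, e x = x := by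
  let g (x : α) : α :=
    if hS : x ∈ S then φ ⟨x, hS⟩ else if hT : x ∈ T then φ.symm ⟨x, hT⟩ else x
  have hgS (x : S) : g x = φ x := dif_pos x.2
  have hgT (y : T) : g y = φ.symm y :=
    (dif_neg (hST.notMem_of_mem_right y.2)).trans (dif_pos y.2)
  have hg : ∀ x ∉ S ∪ T, g x = x := fun x hx =>
    (dif_neg fun hS => hx (.inl hS)).trans (dif_neg fun hT => hx (.inr hT))
  have hinv : Function.Involutive g := by
    intro x
    by_cases hx : x ∈ S ∪ T
    · rcases hx with hS | hT
      · rw [hgS ⟨x, hS⟩, hgT, φ.symm_apply_apply]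
      · rw [hgT ⟨x, hT⟩, hgS, φ.apply_symm_apply]
    · rw [hg x hx, hg x hx]
  exact ⟨hinv.toPerm, hgS, hgT, hg⟩

theorem exists_perm_exchanging_of_ncard_fiber_eq (hST : Disjoint S T)
    (hS : ∀ b, (S ∩ f ⁻¹' {b}).Finite) (hT : ∀ b, (T ∩ f ⁻¹' {b}).Finite)
    (h : ∀ b, (S ∩ f ⁻¹' {b}).ncard = (T ∩ f ⁻¹' {b}).ncard) :
    ∃ e : Equiv.Perm α, (∀ x, f (e x) = f x) ∧ Set.MapsTo e S T ∧ Set.MapsTo e T S ∧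
      ∀ x ∉ S ∪ T, e x = x := by
  obtain ⟨φ, hφ⟩ := exists_equiv_of_ncard_fiber_eq hS hT h
  obtain ⟨e, heS, heT, he⟩ := exists_perm_exchanging hST φ
  refine ⟨e, fun x => ?_, fun x hx => ?_, fun x hx => ?_, he⟩
  · by_cases hx : x ∈ S ∪ T
    · rcases hx with hS | hT
      · rw [heS ⟨x, hS⟩, hφ]
      · rw [heT ⟨x, hT⟩, ← hφ, φ.apply_symm_apply]
    · rw [he x hx]
  · rw [heS ⟨x, hx⟩]
    exact (φ _).2
  · rw [heT ⟨x, hx⟩]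
    exact (φ.symm _).2

theorem ncard_sdiff_inter_fiber_eq {I : Set β} (hA : ∀ b, (A ∩ f ⁻¹' {b}).Finite)
    (hB : ∀ b, (B ∩ f ⁻¹' {b}).Finite)
    (h : ∀ b ∈ I, (A ∩ f ⁻¹' {b}).ncard = (B ∩ f ⁻¹' {b}).ncard) (b : β) :
    ((A \ B) ∩ f ⁻¹' I ∩ f ⁻¹' {b}).ncard = ((B \ A) ∩ f ⁻¹' I ∩ f ⁻¹' {b}).ncard := by
  by_cases hb : b ∈ I
  · have hcut (C D : Set α) :
        (C \ D) ∩ f ⁻¹' I ∩ f ⁻¹' {b} = (C ∩ f ⁻¹' {b}) \ (D ∩ f ⁻¹' {b}) := by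
      ext x
      simp only [Set.mem_inter_iff, Set.mem_sdiff, Set.mem_preimage, Set.mem_singleton_iff]
      grind
    rw [hcut, hcut]
    exact (Set.ncard_eq_ncard_iff_ncard_sdiff_eq_ncard_sdiff (hA b) (hB b)).1 (h b hb)
  · have hcut (C : Set α) : C ∩ f ⁻¹' I ∩ f ⁻¹' {b} = ∅ := by
      ext x
      simp only [Set.mem_inter_iff, Set.mem_preimage, Set.mem_singleton_iff]
      grind
    rw [hcut, hcut]

theorem exists_perm_of_ncard_fiber_eq {I : Set β} (hA : ∀ b, (A ∩ f ⁻¹' {b}).Finite)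
    (hB : ∀ b, (B ∩ f ⁻¹' {b}).Finite)
    (h : ∀ b ∈ I, (A ∩ f ⁻¹' {b}).ncard = (B ∩ f ⁻¹' {b}).ncard) :
    ∃ e : Equiv.Perm α, (∀ x, f (e x) = f x) ∧ (∀ x, f x ∈ I → (e x ∈ B ↔ x ∈ A)) ∧
      ∀ x, e x ≠ x → (x ∈ A ↔ x ∉ B) := by
  obtain ⟨e, hf, hAB, hBA, hfix⟩ := exists_perm_exchanging_of_ncard_fiber_eq
    (S := (A \ B) ∩ f ⁻¹' I) (T := (B \ A) ∩ f ⁻¹' I)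
    (Set.disjoint_left.2 fun x hx hx' => hx.1.2 hx'.1.1)
    (fun b => (hA b).subset fun x hx => ⟨hx.1.1.1, hx.2⟩)
    (fun b => (hB b).subset fun x hx => ⟨hx.1.1.1, hx.2⟩) (ncard_sdiff_inter_fiber_eq hA hB h)
  refine ⟨e, hf, fun x hx => ?_, fun x hx => ?_⟩
  · by_cases hxA : x ∈ A <;> by_cases hxB : x ∈ B
    · rw [hfix x (by simp [hxA, hxB])]
      exact iff_of_true hxB hxA
    · exact iff_of_true (hAB ⟨⟨hxA, hxB⟩, hx⟩).1.1 hxA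
    · exact iff_of_false (hBA ⟨⟨hxB, hxA⟩, hx⟩).1.2 hxA
    · rw [hfix x (by simp [hxA, hxB])]
      exact iff_of_false hxB hxA
  · rcases not_imp_comm.1 (hfix x) hx with hS | hT
    · exact iff_of_true hS.1.1 hS.1.2
    · exact iff_of_false hT.1.2 (not_not.2 hT.1.1)

end FiberPerm

/-! ### Counting non-crossing avoiders -/

section Counting

variable {σ : List ℕ} {s s' : List (List ℕ)} {n : ℕ}

/-- The non-crossing restricted growth functions that avoid `σ`. -/
def avoiders (σ : List ℕ) : Set (List ℕ) := {w | IsRGF w ∧ NonCrossing w ∧ PatAvoids w σ}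

/-- The connected non-crossing restricted growth functions that avoid `σ`. -/
def connectedAvoiders (σ : List ℕ) : Set (List ℕ) := {w ∈ avoiders σ | Connected w}

/-- The number of words of length `n` in `A`, written as the size of a fibre of `List.length`. -/
noncomputable def lengthCount (A : Set (List ℕ)) (n : ℕ) : ℕ := (A ∩ List.length ⁻¹' {n}).ncard

theorem finite_avoiders_inter (σ : List ℕ) (n : ℕ) :
    (avoiders σ ∩ List.length ⁻¹' {n}).Finite :=
  (finite_setOf_isRGF_length_eq n).subset fun _ hw => ⟨hw.1.1, hw.2⟩

theorem finite_connectedAvoiders_inter (σ : List ℕ) (n : ℕ) :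
    (connectedAvoiders σ ∩ List.length ⁻¹' {n}).Finite :=
  (finite_avoiders_inter σ n).subset fun _ hw => ⟨hw.1.1, hw.2⟩

theorem patContains_of_mem_of_notMem_avoiders {τ w : List ℕ} (hσ : w ∈ avoiders σ)
    (hτ : w ∉ avoiders τ) : PatContains w τ := by
  by_contra h
  exact hτ ⟨hσ.1, hσ.2.1, h⟩

theorem bijOn_rgfJoin (hσ : SumIndecomposable σ) :
    Set.BijOn rgfJoin {L | ∀ c ∈ L, c ∈ connectedAvoiders σ} (avoiders σ) := by
  have hmem {L : List (List ℕ)} (hL : ∀ c ∈ L, IsRGF c) :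
      rgfJoin L ∈ avoiders σ ↔ ∀ c ∈ L, c ∈ avoiders σ := by
    have hpos : ∀ c ∈ L, ∀ x ∈ c, 0 < x := fun c hc => (hL c hc).1
    simp only [avoiders, Set.mem_ofPred_eq, isRGF_rgfJoin hL, nonCrossing_rgfJoin_iff hpos,
      PatAvoids, hσ.patContains_rgfJoin_iff hpos, not_exists, not_and, true_and]
    grind
  have hsum : {L : List (List ℕ) | ∀ c ∈ L, c ∈ connectedAvoiders σ} ⊆
      {L : List (List ℕ) | ∀ c ∈ L, SumIndecomposable c ∧ ∀ x ∈ c, 0 < x} := fun L hL c hc =>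
    ⟨(hL c hc).2.sumIndecomposable (hL c hc).1.1, (hL c hc).1.1.1⟩
  refine ⟨fun L hL => (hmem fun c hc => (hL c hc).1.1).2 fun c hc => (hL c hc).1,
    rgfJoin_injOn.mono hsum, fun w hw => ?_⟩
  obtain ⟨L, hL, rfl⟩ := hw.1.exists_components
  have hav := (hmem fun c hc => (hL c hc).1).1 hw
  exact ⟨L, fun c hc => ⟨hav c hc, (hL c hc).2⟩, rfl⟩

theorem lengthCount_avoiders_eq (hσ : SumIndecomposable σ) (n : ℕ) :
    lengthCount (avoiders σ) n =
      {L : List (List ℕ) | (∀ c ∈ L, c ∈ connectedAvoiders σ) ∧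
        (L.map List.length).sum = n}.ncard := by
  rw [lengthCount, ← ((bijOn_rgfJoin hσ).subset_right Set.inter_subset_left).ncard_eq]
  congr 1
  ext L
  simp only [Set.mem_inter_iff, Set.mem_preimage, Set.mem_ofPred_eq, Set.mem_singleton_iff,
    length_rgfJoin]
  exact and_congr_right fun hL => and_iff_right ((bijOn_rgfJoin hσ).mapsTo hL)

theorem hasComponents_rgfJoin_iff {L : List (List ℕ)} (hL : ∀ c ∈ L, IsRGF c ∧ Connected c)
    (p : ℕ) : HasComponents (rgfJoin L) p ↔ L.length = p := by
  refine ⟨?_, fun h => ⟨L, h, hL, rfl⟩⟩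
  rintro ⟨L', rfl, hL', h⟩
  have hsum {L : List (List ℕ)} (hL : ∀ c ∈ L, IsRGF c ∧ Connected c) :
      ∀ c ∈ L, SumIndecomposable c ∧ ∀ x ∈ c, 0 < x := fun c hc =>
    ⟨(hL c hc).2.sumIndecomposable (hL c hc).1, (hL c hc).1.1⟩
  rw [rgfJoin_injOn (hsum hL) (hsum hL') h]

theorem ncCount_eq (hσ : SumIndecomposable σ) (n p : ℕ) :
    ncCount n p σ =
      {L : List (List ℕ) | (∀ c ∈ L, c ∈ connectedAvoiders σ) ∧ L.length = p ∧
        (L.map List.length).sum = n}.ncard := by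
  have hsub : {w | IsRGF w ∧ NonCrossing w ∧ w.length = n ∧ PatAvoids w σ ∧ HasComponents w p} ⊆
      avoiders σ := fun w hw => ⟨hw.1, hw.2.1, hw.2.2.2.1⟩
  rw [ncCount, ← ((bijOn_rgfJoin hσ).subset_right hsub).ncard_eq]
  congr 1
  ext L
  refine and_congr_right fun hL => ?_
  obtain ⟨hrgf, hnc, hav⟩ := (bijOn_rgfJoin hσ).mapsTo hL
  simp only [Set.mem_preimage, Set.mem_ofPred_eq, hrgf, hnc, hav, length_rgfJoin,
    hasComponents_rgfJoin_iff fun c hc => ⟨(hL c hc).1.1, (hL c hc).2⟩, true_and]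
  exact and_comm

theorem bijOn_onePat (hs : ∀ c ∈ s, ∀ x ∈ c, 0 < x) :
    Set.BijOn onePat {L | (∀ c ∈ L, c ∈ avoiders (onePat s)) ∧ L ∉ factorizationLang s}
      (connectedAvoiders (onePat s)) := by
  have hmem {L : List (List ℕ)} (hL : ∀ c ∈ L, IsRGF c ∧ NonCrossing c) :
      onePat L ∈ connectedAvoiders (onePat s) ↔
        (∀ c ∈ L, c ∈ avoiders (onePat s)) ∧ L ∉ factorizationLang s := by
    have hpos : ∀ c ∈ L, ∀ x ∈ c, 0 < x := fun c hc => (hL c hc).1.1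
    have hrgf : IsRGF (onePat L) := isRGF_onePat fun c hc => (hL c hc).1
    have hnc : NonCrossing (onePat L) := (nonCrossing_onePat_iff hpos).2 fun c hc => (hL c hc).2
    simp only [connectedAvoiders, avoiders, Set.mem_ofPred_eq, hrgf, hnc, PatAvoids,
      (sumIndecomposable_onePat L).connected, patContains_onePat_onePat_iff hpos hs, not_or,
      not_exists, not_and, true_and, and_true]
    grind
  refine ⟨fun L hL => (hmem fun c hc => ⟨(hL.1 c hc).1, (hL.1 c hc).2.1⟩).2 hL,
    onePat_injOn.mono fun L hL c hc => (hL.1 c hc).1.1, fun w hw => ?_⟩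
  obtain ⟨L, hL, rfl⟩ := hw.2.exists_eq_onePat hw.1.1 hw.1.2.1
  exact ⟨L, (hmem hL).1 hw, rfl⟩

theorem lengthCount_connectedAvoiders_onePat (hs : ∀ c ∈ s, ∀ x ∈ c, 0 < x) (n : ℕ) :
    lengthCount (connectedAvoiders (onePat s)) n =
      {L : List (List ℕ) | ((∀ c ∈ L, c ∈ avoiders (onePat s)) ∧ L ∉ factorizationLang s) ∧
        1 + L.length + (L.map List.length).sum = n}.ncard := by
  rw [lengthCount, ← ((bijOn_onePat hs).subset_right Set.inter_subset_left).ncard_eq]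
  congr 1
  ext L
  simp only [Set.mem_inter_iff, Set.mem_preimage, Set.mem_ofPred_eq, Set.mem_singleton_iff,
    onePat, length_onePatAux]
  exact and_congr_right fun hL => and_iff_right ((bijOn_onePat hs).mapsTo hL)

theorem PatContains.of_onePat {w c : List ℕ} (h : PatContains w (onePat s))
    (hs : ∀ d ∈ s, ∀ x ∈ d, 0 < x) (hc : c ∈ s) : PatContains w c := by
  obtain ⟨k, hk⟩ := map_rgfJoin_sublist_of_mem hc
  have hmono (k : ℕ) : StrictMono (· + k) := strictMono_id.add_const k
  exact ((h.mono_right (map_add_one_rgfJoin_sublist_onePat hs)).of_map_right (hmono 1)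
    |>.mono_right hk).of_map_right (hmono k)

section MapPerm

variable {e : Equiv.Perm (List ℕ)} {L : List (List ℕ)}

theorem map_mem_joinLang_iff {c : List ℕ} (he : ∀ w, e w ≠ w → PatContains w c) :
    L.map e ∈ joinLang c ↔ L ∈ joinLang c := by
  have hjoin {L : List (List ℕ)} {w : List ℕ} (hw : w ∈ L) (hwc : PatContains w c) :
      L ∈ joinLang c := by
    obtain ⟨k, hk⟩ := map_rgfJoin_sublist_of_mem hw
    have hmono : StrictMono (· + k) := strictMono_id.add_const k
    exact ⟨List.ne_nil_of_mem hw, ((patContains_map_left hmono).2 hwc).mono_left hk⟩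
  by_cases hfix : ∀ w ∈ L, e w = w
  · rw [List.map_congr_left hfix, List.map_id']
  · push Not at hfix
    obtain ⟨w, hw, hew⟩ := hfix
    exact iff_of_true (hjoin (List.mem_map_of_mem hw) (he _ fun h => hew (e.injective h)))
      (hjoin hw (he w hew))

theorem map_mem_factorizationLang_iff (he : ∀ w, e w ≠ w → ∀ c ∈ s, PatContains w c) :
    L.map e ∈ factorizationLang s ↔ L ∈ factorizationLang s := by
  induction s generalizing L with
  | nil =>
    rw [factorizationLang, List.map_nil, List.prod_nil, one_mul]
    exact Iff.rfl
  | cons c s ih =>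
    simp only [factorizationLang_cons, Language.mem_mul]
    have hc {L} : L.map e ∈ joinLang c ↔ L ∈ joinLang c :=
      map_mem_joinLang_iff fun w hw => he w hw c List.mem_cons_self
    have hs {L} : L.map e ∈ factorizationLang s ↔ L ∈ factorizationLang s :=
      ih fun w hw d hd => he w hw d (List.mem_cons_of_mem c hd)
    constructor
    · rintro ⟨u, hu, v, hv, huv⟩
      obtain ⟨u, v, rfl, rfl, rfl⟩ := List.map_eq_append_iff.1 huv.symm
      exact ⟨u, hc.1 hu, v, hs.1 hv, rfl⟩
    · rintro ⟨u, hu, v, hv, rfl⟩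
      exact ⟨_, hc.2 hu, _, hs.2 hv, List.map_append.symm⟩

theorem forall_mem_map_perm_iff {A B : Set (List ℕ)} {I : Set ℕ}
    (he : ∀ w, w.length ∈ I → (e w ∈ B ↔ w ∈ A)) (hL : ∀ c ∈ L, c.length ∈ I) :
    (∀ c ∈ L.map e, c ∈ B) ↔ ∀ c ∈ L, c ∈ A := by
  rw [List.forall_mem_map]
  exact forall₂_congr fun c hc => he c (hL c hc)

theorem sum_map_length_map_perm (he : ∀ w, (e w).length = w.length) :
    ((L.map e).map List.length).sum = (L.map List.length).sum := by
  simp [Function.comp_def, he]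

end MapPerm

theorem ncard_forall_mem_connectedAvoiders_eq {τ : List ℕ}
    (h : ∀ m ≤ n, lengthCount (connectedAvoiders σ) m = lengthCount (connectedAvoiders τ) m)
    (Q : ℕ → Prop) :
    {L : List (List ℕ) | (∀ c ∈ L, c ∈ connectedAvoiders σ) ∧ Q L.length ∧
        (L.map List.length).sum = n}.ncard =
      {L : List (List ℕ) | (∀ c ∈ L, c ∈ connectedAvoiders τ) ∧ Q L.length ∧
        (L.map List.length).sum = n}.ncard := by
  obtain ⟨e, hlen, hmem, -⟩ := exists_perm_of_ncard_fiber_eq (I := Set.Iic n)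
    (finite_connectedAvoiders_inter σ) (finite_connectedAvoiders_inter τ) h
  refine ncard_eq_of_perm (Equiv.listEquivOfEquiv e) fun L => ?_
  change _ ∧ Q (L.map e).length ∧ ((L.map e).map List.length).sum = n ↔ _
  rw [List.length_map, sum_map_length_map_perm hlen]
  refine and_congr_left fun hL => forall_mem_map_perm_iff hmem fun c hc => ?_
  exact (List.le_sum_of_mem (List.mem_map_of_mem hc)).trans hL.2.le

theorem ccEquiv_of_lengthCount_connectedAvoiders_eq {τ : List ℕ} (hσ : SumIndecomposable σ)
    (hτ : SumIndecomposable τ)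
    (h : ∀ n, lengthCount (connectedAvoiders σ) n = lengthCount (connectedAvoiders τ) n) :
    ccEquiv σ τ := by
  intro n p
  rw [ncCount_eq hσ, ncCount_eq hτ]
  exact ncard_forall_mem_connectedAvoiders_eq (fun m _ => h m) (· = p)

theorem lengthCount_connectedAvoiders_onePat_eq_of_lt (hs : ∀ c ∈ s, ∀ x ∈ c, 0 < x)
    (hperm : s.Perm s')
    (h : RearrangeEquivOn {c | IsRGF c} (factorizationLang s) (factorizationLang s'))
    (hlt : ∀ m < n,
      lengthCount (avoiders (onePat s)) m = lengthCount (avoiders (onePat s')) m) :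
    lengthCount (connectedAvoiders (onePat s)) n =
      lengthCount (connectedAvoiders (onePat s')) n := by
  have hs' : ∀ c ∈ s', ∀ x ∈ c, 0 < x := fun c hc => hs c (hperm.mem_iff.2 hc)
  obtain ⟨e, hlen, hmem, hmoved⟩ := exists_perm_of_ncard_fiber_eq (I := Set.Iio n)
    (finite_avoiders_inter (onePat s)) (finite_avoiders_inter (onePat s')) hlt
  have hcontains : ∀ w, e w ≠ w → ∀ c ∈ s, PatContains w c := by
    intro w hw c hc
    by_cases hws : w ∈ avoiders (onePat s)
    · exact (patContains_of_mem_of_notMem_avoiders hws ((hmoved w hw).1 hws)).of_onePat hs'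
        (hperm.mem_iff.1 hc)
    · have hws' : w ∈ avoiders (onePat s') := not_not.1 (mt (hmoved w hw).2 hws)
      exact (patContains_of_mem_of_notMem_avoiders hws' hws).of_onePat hs hc
  obtain ⟨F, hF, hFmem⟩ := h
  rw [lengthCount_connectedAvoiders_onePat hs, lengthCount_connectedAvoiders_onePat hs']
  refine ncard_eq_of_perm ((Equiv.listEquivOfEquiv e).trans F) fun L => ?_
  change ((∀ c ∈ F (L.map e), _) ∧ F (L.map e) ∉ _) ∧
    1 + (F (L.map e)).length + ((F (L.map e)).map List.length).sum = n ↔ _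
  have hFe := hF (L.map e)
  rw [hFe.length_eq, (hFe.map List.length).sum_eq, List.length_map, sum_map_length_map_perm hlen]
  refine and_congr_left fun hL => ?_
  have hshort : ∀ c ∈ L, c.length ∈ Set.Iio n := fun c hc => by
    have := List.le_sum_of_mem (List.mem_map_of_mem (f := List.length) hc)
    simp only [Set.mem_Iio]
    omega
  simp only [hFe.mem_iff]
  rw [forall_mem_map_perm_iff hmem hshort]
  refine and_congr_right fun hav => not_congr ?_
  rw [hFmem _ fun c hc => ((forall_mem_map_perm_iff hmem hshort).2 hav c hc).1,
    map_mem_factorizationLang_iff hcontains]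

theorem ccEquiv_onePat_of_rearrangeEquivOn (hs : ∀ c ∈ s, ∀ x ∈ c, 0 < x) (hperm : s.Perm s')
    (h : RearrangeEquivOn {c | IsRGF c} (factorizationLang s) (factorizationLang s')) :
    ccEquiv (onePat s) (onePat s') := by
  have hind := sumIndecomposable_onePat
  refine ccEquiv_of_lengthCount_connectedAvoiders_eq (hind s) (hind s') fun n => ?_
  induction n using Nat.strong_induction_on with
  | _ n ih =>
    refine lengthCount_connectedAvoiders_onePat_eq_of_lt hs hperm h fun m hm => ?_
    rw [lengthCount_avoiders_eq (hind s), lengthCount_avoiders_eq (hind s')]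
    simpa using ncard_forall_mem_connectedAvoiders_eq (fun k hk => ih k (by omega)) fun _ => True

end Counting

theorem stmt9_general (pre post : List (List ℕ)) (a b : List ℕ)
    (hpos : ∀ c ∈ pre ++ [a, b] ++ post, ∀ x ∈ c, 0 < x) (ha : IsRGF a)
    (hq : a = [] ∨ Connected a ∨ a.Nodup) :
    ccEquiv (onePat (pre ++ [a, b] ++ post)) (onePat (pre ++ [b, a] ++ post)) :=
  ccEquiv_onePat_of_rearrangeEquivOn hpos
    (((List.Perm.swap b a []).append_left pre).append_right post)
    (rearrangeEquivOn_factorizationLang_swap ha hq pre post b)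

/-- Theorem 3.5: in `1[σ₁]1⋯1[σ_k]1`, swapping adjacent factors `σ_q, σ_{q+1}`
yields a cc-equivalent pattern, provided `σ_q` is empty, connected, or has all
letters distinct. -/
theorem stmt9 (pre post : List (List ℕ)) (a b : List ℕ)
    (hall : ∀ c ∈ pre ++ [a, b] ++ post, IsRGF c ∧ NonCrossing c)
    (hq : a = [] ∨ Connected a ∨ a.Nodup) :
    ccEquiv (onePat (pre ++ [a, b] ++ post)) (onePat (pre ++ [b, a] ++ post)) :=
  stmt9_general pre post a b (fun c hc => (hall c hc).1.1) (hall a (by simp)).1 hq
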